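/- Let 𝒮 ⊂ ℝ³ be a smooth (C¹) compact closed embedded surface with exterior unit normal n, and let v₊, v₋ be C¹ vector fields, defined up to 𝒮 on the exterior and interior regions respectively, which are divergence-free and tangent to 𝒮. Then the integral over 𝒮 of ⟨D(v₊ + v₋)·n, n⟩ with respect to the surface measure equals 0. In particular, the stability inequality ⟨D(v₊ + v₋)·n, n⟩ < 0 cannot hold at every point of 𝒮. -/

import Mathlib

noncomputable section

open MeasureTheory Filter Set
open scoped RealInnerProductSpace Topology

abbrev E3 : Type := EuclideanSpace ℝ (Fin 3)
abbrev E2 : Type := EuclideanSpace ℝ (Fin 2)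

def mk3 (a b c : ℝ) : E3 := (EuclideanSpace.equiv (Fin 3) ℝ).symm ![a, b, c]

def e3 (i : Fin 3) : E3 := EuclideanSpace.single i 1

/-- `∂_j v_i` at `p`. -/
def pder (v : E3 → E3) (i j : Fin 3) (p : E3) : ℝ := fderiv ℝ v p (e3 j) i

def div3 (v : E3 → E3) (p : E3) : ℝ := ∑ i, pder v i i p

def curl3 (v : E3 → E3) (p : E3) : E3 :=
  mk3 (pder v 2 1 p - pder v 1 2 p) (pder v 0 2 p - pder v 2 0 p)
    (pder v 1 0 p - pder v 0 1 p)

def lap3 (f : E3 → ℝ) (p : E3) : ℝ :=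
  ∑ j, fderiv ℝ (fun x => fderiv ℝ f x (e3 j)) p (e3 j)

def IsTangentAt (S : Set E3) (p v : E3) : Prop :=
  ∃ γ : ℝ → E3, (∀ t, γ t ∈ S) ∧ γ 0 = p ∧ HasDerivAt γ v 0

def IsSurface (k : ℕ∞) (S : Set E3) : Prop :=
  ∀ p ∈ S, ∃ (f : E2 → E3) (U : Set E2) (V : Set E3),
    IsOpen U ∧ IsOpen V ∧ p ∈ V ∧ ContDiffOn ℝ k f U ∧ Set.InjOn f U ∧
    f '' U = S ∩ V ∧ ∀ x ∈ U, Function.Injective (fderiv ℝ f x)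

structure CVSBase (S Ωm Ωp : Set E3) (vm vp : E3 → E3) : Prop where
  openm : IsOpen Ωm
  openp : IsOpen Ωp
  disj : Disjoint Ωm Ωp
  disjm : Disjoint Ωm S
  disjp : Disjoint Ωp S
  clm : S ⊆ closure Ωm
  clp : S ⊆ closure Ωp
  smoothm : ∃ W, IsOpen W ∧ Ωm ∪ S ⊆ W ∧ ContDiffOn ℝ 1 vm W
  smoothp : ∃ W, IsOpen W ∧ Ωp ∪ S ⊆ W ∧ ContDiffOn ℝ 1 vp W
  divm : ∀ p ∈ Ωm, div3 vm p = 0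
  divp : ∀ p ∈ Ωp, div3 vp p = 0
  curlm : ∀ p ∈ Ωm, curl3 vm p = 0
  curlp : ∀ p ∈ Ωp, curl3 vp p = 0
  tangentm : ∀ p ∈ S, IsTangentAt S p (vm p)
  tangentp : ∀ p ∈ S, IsTangentAt S p (vp p)

structure CVSPair (S Ωm Ωp : Set E3) (vm vp : E3 → E3)
    extends CVSBase S Ωm Ωp vm vp : Prop where
  strain : ∀ p ∈ S, (fderiv ℝ vp p + fderiv ℝ vm p) (vp p - vm p) = 0
  bernoulli : ∀ p ∈ S, ∀ᶠ q in 𝓝[S] p,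
    ‖vp q‖ ^ 2 - ‖vm q‖ ^ 2 = ‖vp p‖ ^ 2 - ‖vm p‖ ^ 2

/-- the open region `Ωm` is the bounded region enclosed by the closed surface `S`,
and `Ωp` is its exterior. -/
structure EnclosedBy (S Ωm Ωp : Set E3) : Prop where
  openm : IsOpen Ωm
  bounded : Bornology.IsBounded Ωm
  fr : frontier Ωm = S
  plus : Ωp = (Ωm ∪ S)ᶜ

/-!
Since `v` is divergence-free and `C¹` up to `S`, the trace of `Dv` vanishes on `S`, so
`⟪Dv n, n⟫ = -div_S v`, and each of the two fields contributes zero by the first variation of area: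
the flow of a tangent field maps `S` into itself, hence cannot increase the area of `S`, which gives
`∫ div_S v ≤ 0`; applying this to `-v` gives equality.

The area of the image under the flow is compared with `∫ (1 + t div_S v)` by projecting small pieces
of `S` to tangent planes. This requires `S` to be flat near each of its points,
`|⟪n p, x - y⟫| ≤ δ ‖x - y‖` for `x, y ∈ S` near `p`. Charts are not assumed to be homeomorphisms
onto their images, so a point of `S` could a priori be approached by several sheets. That this does
not happen is seen on lines parallel to the normal `n p`: near `p` they cross `S` only from `Ωm` to
`Ωp`, hence at most once.
-/

open Module
open scoped ENNReal

section HausdorffMeasure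

variable {X Y : Type*} [EMetricSpace X] [MeasurableSpace X] [BorelSpace X]
  [EMetricSpace Y] [MeasurableSpace Y] [BorelSpace Y]

theorem hausdorffMeasure_le_of_antilipschitzWith_restrict {a : Set X} {g : X → Y} {K : NNReal}
    {d : ℝ} (hd : 0 ≤ d) (hg : AntilipschitzWith K (a.domRestrict g)) :
    μH[d] a ≤ (K : ℝ≥0∞) ^ d * μH[d] (g '' a) := by
  have h := hg.le_hausdorffMeasure_image hd univ
  rw [← isometry_subtype_coe.hausdorffMeasure_image (.inl hd)] at h
  simpa [image_image, range_domRestrict] using h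

end HausdorffMeasure

section LinearMaps

variable {X F : Type*} [MetricSpace X] [MeasurableSpace X] [BorelSpace X]
  [NormedAddCommGroup F] [NormedSpace ℝ F] [FiniteDimensional ℝ F]
  [MeasurableSpace F] [BorelSpace F]

theorem ofReal_mul_hausdorffMeasure_le_image {a : Set X} {f : X → F} (L : F ≃ₗ[ℝ] F) {c : ℝ}
    (hc : 0 < c)
    (hf : ∀ x ∈ a, ∀ y ∈ a, c * dist x y ≤ dist (L.symm (f x)) (L.symm (f y))) :
    ENNReal.ofReal (c ^ finrank ℝ F * |LinearMap.det (L : F →ₗ[ℝ] F)|) * μH[finrank ℝ F] a ≤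
      μH[finrank ℝ F] (f '' a) := by
  set d := finrank ℝ F
  have hdet : 0 < |LinearMap.det (L : F →ₗ[ℝ] F)| := abs_pos.2 L.isUnit_det'.ne_zero
  have hanti : AntilipschitzWith (Real.toNNReal c⁻¹) (a.domRestrict (L.symm ∘ f)) :=
    AntilipschitzWith.of_le_mul_dist fun x y ↦ by
      rw [Real.coe_toNNReal _ (by positivity), inv_mul_eq_div, le_div_iff₀ hc, mul_comm]
      exact hf x x.2 y y.2
  have himage : μH[d] ((L.symm ∘ f) '' a) =
      ENNReal.ofReal |LinearMap.det (L : F →ₗ[ℝ] F)|⁻¹ * μH[d] (f '' a) := by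
    rw [image_comp, ← abs_inv, ← LinearEquiv.det_coe_symm]
    exact Measure.addHaar_image_linearMap _ (L.symm : F →ₗ[ℝ] F) _
  calc ENNReal.ofReal (c ^ d * |LinearMap.det (L : F →ₗ[ℝ] F)|) * μH[d] a
      ≤ ENNReal.ofReal (c ^ d * |LinearMap.det (L : F →ₗ[ℝ] F)|) *
          ((Real.toNNReal c⁻¹ : ℝ≥0∞) ^ (d : ℝ) * μH[d] ((L.symm ∘ f) '' a)) := by
        gcongr
        exact hausdorffMeasure_le_of_antilipschitzWith_restrict d.cast_nonneg hanti
    _ = ENNReal.ofReal (c ^ d * |LinearMap.det (L : F →ₗ[ℝ] F)| * (c⁻¹ ^ d *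
          |LinearMap.det (L : F →ₗ[ℝ] F)|⁻¹)) * μH[d] (f '' a) := by
        rw [himage, ENNReal.rpow_natCast, ENNReal.ofReal_mul (p := c ^ d * _) (by positivity),
          ENNReal.ofReal_mul (p := c⁻¹ ^ d) (by positivity),
          ENNReal.ofReal_pow (p := c⁻¹) (by positivity)]
        simp only [ENNReal.ofReal, mul_assoc]
    _ = μH[d] (f '' a) := by
        rw [inv_pow, ← mul_inv, mul_inv_cancel₀ (by positivity), ENNReal.ofReal_one, one_mul]

theorem abs_det_le_norm_pow_finrank (B : F →L[ℝ] F) :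
    |LinearMap.det (B : F →ₗ[ℝ] F)| ≤ ‖B‖ ^ finrank ℝ F := by
  have h := B.lipschitz.hausdorffMeasure_image_le (finrank ℝ F).cast_nonneg (Metric.ball 0 1)
  rw [← ContinuousLinearMap.coe_coe, Measure.addHaar_image_linearMap, ENNReal.rpow_natCast,
    ENNReal.mul_le_mul_iff_left (Metric.measure_ball_pos _ _ one_pos).ne'
      measure_ball_lt_top.ne] at h
  rw [← ENNReal.ofReal_le_ofReal_iff (by positivity), ENNReal.ofReal_pow (norm_nonneg B),
    ofReal_norm]
  exact h

end LinearMaps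

section Compression

variable {E : Type*} [NormedAddCommGroup E] [InnerProductSpace ℝ E]

/-- The compression of an operator `A` to a subspace `H`: restrict `A` to `H`, then project back
orthogonally onto `H`. -/
def compression (H : Submodule ℝ E) [H.HasOrthogonalProjection] (A : E →L[ℝ] E) : H →L[ℝ] H :=
  H.orthogonalProjectionOnto ∘L A ∘L H.subtypeL

section

variable (H : Submodule ℝ E) [H.HasOrthogonalProjection]

theorem norm_compression_le (A : E →L[ℝ] E) : ‖compression H A‖ ≤ ‖A‖ :=
  ContinuousLinearMap.opNorm_le_bound _ (norm_nonneg _) fun w ↦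
    (H.norm_orthogonalProjectionOnto_apply_le _).trans (A.le_opNorm w)

theorem trace_compression [FiniteDimensional ℝ E] (A : E →L[ℝ] E) :
    LinearMap.trace ℝ H (compression H A) = LinearMap.trace ℝ E (A ∘L H.starProjection) :=
  (LinearMap.trace_comp_comm' (H.orthogonalProjectionOnto : E →ₗ[ℝ] H)
    ((A : E →ₗ[ℝ] E) ∘ₗ H.subtype)).symm

end

theorem starProjection_orthogonal_unit_singleton {n : E} (hn : ‖n‖ = 1) (x : E) :
    (ℝ ∙ n)ᗮ.starProjection x = x - ⟪n, x⟫ • n := by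
  rw [Submodule.starProjection_orthogonal_val, Submodule.starProjection_unit_singleton ℝ hn]

theorem trace_compression_orthogonal_singleton [FiniteDimensional ℝ E] {n : E} (hn : ‖n‖ = 1)
    (A : E →L[ℝ] E) :
    LinearMap.trace ℝ (ℝ ∙ n)ᗮ (compression (ℝ ∙ n)ᗮ A) = LinearMap.trace ℝ E A - ⟪A n, n⟫ := by
  have hproj : (A ∘L (ℝ ∙ n)ᗮ.starProjection : E →L[ℝ] E) =
      A - InnerProductSpace.rankOne ℝ (A n) n := by
    ext x
    simp [starProjection_orthogonal_unit_singleton hn]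
  rw [trace_compression, hproj, ContinuousLinearMap.toLinearMap_sub, map_sub,
    InnerProductSpace.trace_rankOne, real_inner_comm]

theorem abs_trace_le [FiniteDimensional ℝ E] (B : E →L[ℝ] E) :
    |LinearMap.trace ℝ E B| ≤ finrank ℝ E * ‖B‖ := by
  let b := stdOrthonormalBasis ℝ E
  have hentry (i) : |⟪b i, B (b i)⟫| ≤ ‖B‖ := by
    simpa using (abs_real_inner_le_norm (b i) (B (b i))).trans
      (mul_le_mul_of_nonneg_left (B.le_opNorm (b i)) (norm_nonneg _))
  rw [LinearMap.trace_eq_sum_inner _ b]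
  calc |∑ i, ⟪b i, B (b i)⟫| ≤ ∑ i, |⟪b i, B (b i)⟫| := Finset.abs_sum_le_sum_abs _ _
    _ ≤ ∑ _i : Fin (finrank ℝ E), ‖B‖ := Finset.sum_le_sum fun i _ ↦ hentry i
    _ = finrank ℝ E * ‖B‖ := by simp

end Compression

theorem det_one_add_of_finrank_eq_two {R M : Type*} [Field R] [AddCommGroup M] [Module R M]
    (hM : finrank R M = 2) (B : M →ₗ[R] M) :
    LinearMap.det (1 + B) = 1 + LinearMap.trace R M B + LinearMap.det B := by
  have := FiniteDimensional.of_finrank_eq_succ hM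
  let b := finBasisOfFinrankEq R M hM
  rw [← LinearMap.det_toMatrix b, ← LinearMap.det_toMatrix b, LinearMap.trace_eq_matrix_trace R b,
    map_add, LinearMap.toMatrix_one, Matrix.det_fin_two, Matrix.det_fin_two, Matrix.trace_fin_two]
  simp only [Fin.isValue, Matrix.add_apply, Matrix.one_apply_eq, ne_eq, zero_ne_one,
    not_false_eq_true, Matrix.one_apply_ne, zero_add, one_ne_zero]
  ring

theorem norm_le_two_mul_norm_one_add {F : Type*} [NormedAddCommGroup F] [NormedSpace ℝ F]
    {B : F →L[ℝ] F} (hB : ‖B‖ ≤ 1 / 2) (w : F) : ‖w‖ ≤ 2 * ‖(1 + B) w‖ := by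
  have h : ‖w‖ ≤ ‖(1 + B) w‖ + ‖B w‖ := by simpa using norm_sub_le ((1 + B) w) (B w)
  linarith [B.le_of_opNorm_le hB w]

section Area

variable {E : Type*} [NormedAddCommGroup E] [InnerProductSpace ℝ E]

theorem mul_norm_le_norm_of_one_add_compression_eq {H : Submodule ℝ E}
    [H.HasOrthogonalProjection] {A : E →L[ℝ] E} {τ : ℝ} (hA : ‖A‖ ≤ 1 / 2) {u v : E}
    (hv : ‖v - u - A u‖ ≤ τ * ‖u‖) (hu : ‖u - H.starProjection u‖ ≤ τ * ‖u‖) {w : H}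
    (hw : (1 + compression H A) w = H.orthogonalProjectionOnto v) :
    (1 - 5 * τ) * ‖u‖ ≤ ‖w‖ := by
  set π := H.orthogonalProjectionOnto
  have hπ (x : E) : ‖π x‖ ≤ ‖x‖ := H.norm_orthogonalProjectionOnto_apply_le x
  have hsplit : (1 + compression H A) (w - π u) =
      π (v - u - A u) + π (A (u - H.starProjection u)) := by
    have hπu : (1 + compression H A) (π u) = π u + π (A (H.starProjection u)) := rfl
    rw [map_sub, hw, hπu]
    simp only [map_sub]
    abel
  have hrem : ‖(1 + compression H A) (w - π u)‖ ≤ 2 * τ * ‖u‖ := calc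
    ‖(1 + compression H A) (w - π u)‖
      ≤ ‖π (v - u - A u)‖ + ‖π (A (u - H.starProjection u))‖ := hsplit ▸ norm_add_le _ _
    _ ≤ ‖v - u - A u‖ + 1 / 2 * ‖u - H.starProjection u‖ :=
      add_le_add (hπ _) ((hπ _).trans (A.le_of_opNorm_le hA _))
    _ ≤ 2 * τ * ‖u‖ := by linarith [norm_nonneg (u - H.starProjection u)]
  have hπu : ‖u‖ - ‖π u‖ ≤ τ * ‖u‖ := (norm_sub_norm_le u (H.starProjection u)).trans hu
  linarith [norm_le_two_mul_norm_one_add ((norm_compression_le H A).trans hA) (w - π u),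
    norm_sub_norm_le (π u) w, norm_sub_rev (π u) w]

theorem le_sq_mul_abs_det_one_add (hE : finrank ℝ E = 2) {B : E →L[ℝ] E} {τ : ℝ}
    (hB : ‖B‖ ≤ 1 / 2) (hBτ : ‖B‖ ^ 2 ≤ τ) (hτ : τ < 1 / 5) :
    1 + LinearMap.trace ℝ E B - 21 * τ ≤
      (1 - 5 * τ) ^ 2 * |LinearMap.det (1 + (B : E →ₗ[ℝ] E))| := by
  have := FiniteDimensional.of_finrank_eq_succ hE
  borelize E
  have htrace : |LinearMap.trace ℝ E B| ≤ 1 := by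
    have h : |LinearMap.trace ℝ E B| ≤ 2 * ‖B‖ := by simpa [hE] using abs_trace_le B
    linarith
  have hdet : 1 + LinearMap.trace ℝ E B - τ ≤ LinearMap.det (1 + (B : E →ₗ[ℝ] E)) := by
    have h : |LinearMap.det (B : E →ₗ[ℝ] E)| ≤ ‖B‖ ^ 2 := by
      simpa [hE] using abs_det_le_norm_pow_finrank B
    rw [det_one_add_of_finrank_eq_two hE]
    linarith [neg_abs_le (LinearMap.det (B : E →ₗ[ℝ] E))]
  have hτ0 : 0 ≤ τ := (sq_nonneg _).trans hBτ
  obtain ⟨htr, htr'⟩ := abs_le.1 htrace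
  calc 1 + LinearMap.trace ℝ E B - 21 * τ
      ≤ (1 - 5 * τ) ^ 2 * (1 + LinearMap.trace ℝ E B - τ) := by
        nlinarith [mul_nonneg hτ0 (sub_nonneg.2 htr'), mul_nonneg hτ0 hτ0,
          mul_nonneg (mul_nonneg hτ0 hτ0) (sub_nonneg.2 hτ.le),
          mul_nonneg (mul_nonneg hτ0 hτ0) (neg_le_iff_add_nonneg.1 htr)]
    _ ≤ _ := by gcongr; exact hdet.trans (le_abs_self _)

theorem ofReal_mul_hausdorffMeasure_le_image_of_compression [MeasurableSpace E]
    [BorelSpace E] {H : Submodule ℝ E} (hH : finrank ℝ H = 2) [H.HasOrthogonalProjection]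
    {A : E →L[ℝ] E} {τ : ℝ} (hA : ‖A‖ ≤ 1 / 2) (hAτ : ‖A‖ ^ 2 ≤ τ) (hτ : τ < 1 / 5)
    {a : Set E} {φ : E → E}
    (hφ : ∀ x ∈ a, ∀ y ∈ a, ‖φ x - φ y - (x - y) - A (x - y)‖ ≤ τ * ‖x - y‖)
    (ha : ∀ x ∈ a, ∀ y ∈ a, ‖x - y - H.starProjection (x - y)‖ ≤ τ * ‖x - y‖) :
    ENNReal.ofReal (1 + LinearMap.trace ℝ H (compression H A) - 21 * τ) * μH[2] a ≤
      μH[2] (φ '' a) := by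
  have := FiniteDimensional.of_finrank_eq_succ hH
  have hB := norm_compression_le H A
  let M : H →ₗ[ℝ] H := 1 + (compression H A : H →ₗ[ℝ] H)
  have hM : Function.Injective M := (injective_iff_map_eq_zero M).2 fun w hw ↦ by
    have h := norm_le_two_mul_norm_one_add (hB.trans hA) w
    rwa [show (1 + compression H A) w = 0 from hw, norm_zero, mul_zero, norm_le_zero_iff] at h
  let L := LinearEquiv.ofInjectiveEndo M hM
  let f : E → H := fun x ↦ H.orthogonalProjectionOnto (φ x)
  have hexpand : ∀ x ∈ a, ∀ y ∈ a,
      (1 - 5 * τ) * dist x y ≤ dist (L.symm (f x)) (L.symm (f y)) := by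
    intro x hx y hy
    rw [dist_eq_norm, dist_eq_norm, ← map_sub, ← map_sub]
    exact mul_norm_le_norm_of_one_add_compression_eq hA (hφ x hx y hy) (ha x hx y hy)
      (L.apply_symm_apply _)
  calc ENNReal.ofReal (1 + LinearMap.trace ℝ H (compression H A) - 21 * τ) * μH[2] a
      ≤ ENNReal.ofReal ((1 - 5 * τ) ^ 2 * |LinearMap.det M|) * μH[2] a := by
        gcongr
        exact le_sq_mul_abs_det_one_add hH (hB.trans hA)
          ((pow_le_pow_left₀ (norm_nonneg _) hB 2).trans hAτ) hτ
    _ ≤ μH[2] (f '' a) := by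
        have h := ofReal_mul_hausdorffMeasure_le_image L (by linarith) hexpand
        rw [hH] at h
        exact_mod_cast h
    _ ≤ μH[2] (φ '' a) := by
        rw [show f '' a = H.orthogonalProjectionOnto '' (φ '' a) from image_comp _ φ a]
        simpa using H.lipschitzWith_orthogonalProjectionOnto.hausdorffMeasure_image_le
          zero_le_two (φ '' a)

theorem hausdorffMeasure_lt_top_of_norm_sub_starProjection_le [MeasurableSpace E] [BorelSpace E]
    {H : Submodule ℝ E} [FiniteDimensional ℝ H] {a : Set E} (ha : Bornology.IsBounded a) {c : ℝ}
    (hc : c < 1) (h : ∀ x ∈ a, ∀ y ∈ a, ‖x - y - H.starProjection (x - y)‖ ≤ c * ‖x - y‖) :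
    μH[finrank ℝ H] a < ⊤ := by
  set π := H.orthogonalProjectionOnto
  have hanti : AntilipschitzWith (Real.toNNReal (1 - c)⁻¹) (a.domRestrict π) :=
    AntilipschitzWith.of_le_mul_dist fun x y ↦ by
      have hπ : ‖(x - y : E)‖ - ‖π (x - y)‖ ≤ c * ‖(x - y : E)‖ :=
        (norm_sub_norm_le _ (H.starProjection (x - y))).trans (h x x.2 y y.2)
      rw [Real.coe_toNNReal _ (inv_nonneg.2 (sub_pos.2 hc).le), inv_mul_eq_div,
        le_div_iff₀ (sub_pos.2 hc), Subtype.dist_eq, dist_eq_norm, domRestrict_apply,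
        domRestrict_apply, dist_eq_norm, ← map_sub]
      linarith
  refine (hausdorffMeasure_le_of_antilipschitzWith_restrict (Nat.cast_nonneg _) hanti).trans_lt ?_
  exact ENNReal.mul_lt_top (by simp) (π.lipschitz.isBounded_image ha).measure_lt_top

end Area

theorem finrank_orthogonal_singleton_of_norm_eq_one {n : E3} (hn : ‖n‖ = 1) :
    finrank ℝ (ℝ ∙ n)ᗮ = 2 := by
  have : Fact (finrank ℝ E3 = 2 + 1) := ⟨by simp⟩
  exact Submodule.finrank_orthogonal_span_singleton (norm_ne_zero_iff.1 (by simp [hn]))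

section Continuation

variable {E : Type*} [NormedAddCommGroup E] [NormedSpace ℝ E]

open scoped Pointwise in
theorem exists_mem_add_mem_of_forall_step {S K : Set E} (hS : IsClosed S) (hK : IsCompact K)
    (hKconv : Convex ℝ K) (hKne : K.Nonempty) {x : E} (hx : x ∈ S)
    (hstep : ∀ s ∈ Ico (0 : ℝ) 1, ∀ k ∈ K, x + s • k ∈ S →
      ∀ᶠ t : ℝ in 𝓝[>] 0, ∃ k' ∈ K, x + s • k + t • k' ∈ S) :
    ∃ k ∈ K, x + k ∈ S := by
  let A : Set ℝ := {s | ∃ k ∈ K, x + s • k ∈ S}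
  have hclosed : IsClosed (A ∩ Icc 0 1) := by
    have hA : A ∩ Icc 0 1 = Prod.fst '' (Icc (0 : ℝ) 1 ×ˢ K ∩ {z | x + z.1 • z.2 ∈ S}) := by
      ext s
      constructor
      · rintro ⟨⟨k, hk, hkS⟩, hs⟩
        exact ⟨(s, k), ⟨⟨hs, hk⟩, hkS⟩, rfl⟩
      · rintro ⟨⟨_, k⟩, ⟨⟨hs, hk⟩, hkS⟩, rfl⟩
        exact ⟨⟨k, hk, hkS⟩, hs⟩
    rw [hA]
    exact (((isCompact_Icc.prod hK).inter_right (hS.preimage (by fun_prop))).image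
      continuous_fst).isClosed
  have hzero : (0 : ℝ) ∈ A := hKne.imp fun k hk ↦ ⟨hk, by simpa using hx⟩
  have hright : ∀ s ∈ A ∩ Ico 0 1, A ∈ 𝓝[>] s := by
    rintro s ⟨⟨k, hk, hks⟩, hs⟩
    have hmap : 𝓝[>] s = map (s + ·) (𝓝[>] 0) := by simp [map_add_left_nhdsGT]
    rw [hmap]
    change ∀ᶠ t in 𝓝[>] (0 : ℝ), ∃ k ∈ K, x + (s + t) • k ∈ S
    filter_upwards [hstep s hs k hk hks, self_mem_nhdsWithin] with t ⟨k', hk', ht⟩ htpos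
    have hadd : s • k + t • k' ∈ (s + t) • K :=
      hKconv.add_smul hs.1 (le_of_lt htpos) ▸
        Set.add_mem_add (smul_mem_smul_set hk) (smul_mem_smul_set hk')
    obtain ⟨k'', hk'', heq : (s + t) • k'' = s • k + t • k'⟩ := hadd
    exact ⟨k'', hk'', by rwa [heq, ← add_assoc]⟩
  obtain ⟨k, hk, hkS⟩ :=
    hclosed.Icc_subset_of_forall_mem_nhdsWithin hzero hright (right_mem_Icc.2 zero_le_one)
  exact ⟨k, hk, by simpa using hkS⟩

end Continuation

/-- A compact `C¹` surface `S` bounding `Ωm`, with exterior `Ωp`, together with its unit normal `n`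
pointing out of `Ωm`. -/
structure HasOuterNormal (S Ωm Ωp : Set E3) (n : E3 → E3) : Prop
    extends EnclosedBy S Ωm Ωp where
  isSurface : IsSurface 1 S
  isCompact : IsCompact S
  norm_eq_one : ∀ p ∈ S, ‖n p‖ = 1
  inner_eq_zero : ∀ p ∈ S, ∀ v, IsTangentAt S p v → ⟪n p, v⟫ = 0
  continuousOn : ContinuousOn n S
  outward : ∀ p ∈ S, ∃ ε > (0 : ℝ), ∀ t : ℝ, 0 < t → t < ε →
    p + t • n p ∈ Ωp ∧ p - t • n p ∈ Ωm

theorem isTangentAt_of_hasFDerivAt {S : Set E3} {f : E2 → E3} {U : Set E2} (hU : IsOpen U)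
    (hf : MapsTo f U S) {u : E2} (hu : u ∈ U) {f' : E2 →L[ℝ] E3} (hd : HasFDerivAt f f' u)
    (v : E2) : IsTangentAt S (f u) (f' v) := by
  classical
  have hline : HasDerivAt (fun t : ℝ ↦ u + t • v) v 0 := by
    simpa using ((hasDerivAt_id (0 : ℝ)).smul_const v).const_add u
  have hcurve : HasDerivAt (fun t : ℝ ↦ f (u + t • v)) (f' v) 0 :=
    HasFDerivAt.comp_hasDerivAt (0 : ℝ) (by simpa using hd) hline
  have hmem : ∀ᶠ t : ℝ in 𝓝 0, u + t • v ∈ U :=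
    hline.continuousAt.eventually_mem (by simpa using hU.mem_nhds hu)
  refine ⟨fun t ↦ if u + t • v ∈ U then f (u + t • v) else f u, fun t ↦ ?_, by simp, ?_⟩
  · dsimp only
    split_ifs with h
    exacts [hf h, hf hu]
  · exact hcurve.congr_of_eventuallyEq (hmem.mono fun t ht ↦ if_pos ht)

theorem exists_hasDerivAt_lift {Z E : Type*} [NormedAddCommGroup Z] [NormedSpace ℝ Z]
    [CompleteSpace Z] [NormedAddCommGroup E] [NormedSpace ℝ E] {Φ : Z → E} {e : Z ≃L[ℝ] E} {z : Z}
    (hΦ : HasStrictFDerivAt Φ (e : Z →L[ℝ] E) z) (v : E) :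
    ∃ c : ℝ → Z, c 0 = z ∧ HasDerivAt c (e.symm v) 0 ∧ ∀ᶠ t in 𝓝 0, Φ (c t) = Φ z + t • v := by
  have hline : HasDerivAt (fun t : ℝ ↦ Φ z + t • v) v 0 := by
    simpa using ((hasDerivAt_id (0 : ℝ)).smul_const v).const_add (Φ z)
  have hinv : HasFDerivAt (hΦ.localInverse Φ e z) (e.symm : E →L[ℝ] Z) (Φ z + (0 : ℝ) • v) := by
    simpa using hΦ.to_localInverse.hasFDerivAt
  refine ⟨fun t ↦ hΦ.localInverse Φ e z (Φ z + t • v), by simp,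
    (hinv.comp_hasDerivAt (0 : ℝ) hline :), ?_⟩
  exact (by simpa using hline.continuousAt.tendsto :
    Tendsto (fun t : ℝ ↦ Φ z + t • v) (𝓝 0) (𝓝 (Φ z))).eventually hΦ.eventually_right_inverse

namespace IsSurface

theorem exists_graph {S : Set E3} (hS : IsSurface 1 S) {q ν m v : E3} (hq : q ∈ S)
    (hν : ∀ v, IsTangentAt S q v → ⟪ν, v⟫ = 0) (hm : ⟪ν, m⟫ ≠ 0) (hv : ⟪ν, v⟫ = 0) :
    ∃ h : ℝ → ℝ, h 0 = 0 ∧ HasDerivAt h 0 0 ∧ ∀ᶠ t in 𝓝 0, q + t • v + h t • m ∈ S := by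
  obtain ⟨f, U, V, hU, -, hqV, hfC, -, himage, hinj⟩ := hS q hq
  obtain ⟨u, hu, rfl⟩ : q ∈ f '' U := himage ▸ ⟨hq, hqV⟩
  have hfS : MapsTo f U S := fun x hx ↦ (himage ▸ mem_image_of_mem f hx : f x ∈ S ∩ V).1
  have hf : HasStrictFDerivAt f (fderiv ℝ f u) u :=
    (hfC.contDiffAt (hU.mem_nhds hu)).hasStrictFDerivAt (by norm_num)
  have hnormal (w : E2) : ⟪ν, fderiv ℝ f u w⟫ = 0 :=
    hν _ (isTangentAt_of_hasFDerivAt hU hfS hu hf.hasFDerivAt w)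
  let Φ : E2 × ℝ → E3 := fun z ↦ f z.1 - z.2 • m
  let Φ' : E2 × ℝ →L[ℝ] E3 := (fderiv ℝ f u).comp (.fst ℝ E2 ℝ) -
    (ContinuousLinearMap.snd ℝ E2 ℝ).smulRight m
  have hΦ : HasStrictFDerivAt Φ Φ' (u, 0) :=
    (HasStrictFDerivAt.comp (u, (0 : ℝ)) hf hasStrictFDerivAt_fst).sub
      (hasStrictFDerivAt_snd.smul_const m)
  have hheight {z : E2 × ℝ} (hz : ⟪ν, Φ' z⟫ = 0) : z.2 = 0 := by
    simpa [Φ', inner_sub_right, inner_smul_right, hnormal, hm] using hz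
  have hΦ'inj : Function.Injective Φ' := (injective_iff_map_eq_zero Φ').2 fun z hz ↦ by
    have hz2 : z.2 = 0 := hheight (by rw [hz, inner_zero_right])
    have hz1 : fderiv ℝ f u z.1 = 0 := by simpa [Φ', hz2] using hz
    exact Prod.ext (hinj u hu (hz1.trans (map_zero _).symm)) hz2
  let e : (E2 × ℝ) ≃L[ℝ] E3 := (LinearEquiv.ofInjectiveOfFinrankEq (Φ' : E2 × ℝ →ₗ[ℝ] E3) hΦ'inj
    (by simp)).toContinuousLinearEquiv
  obtain ⟨c, hc0, hc, hΦc⟩ := exists_hasDerivAt_lift (e := e) hΦ v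
  have hsymm : (e.symm v).2 = 0 := hheight ((e.apply_symm_apply v).symm ▸ hv)
  have hsnd : HasDerivAt (fun t ↦ (c t).2) (e.symm v).2 0 :=
    (hasFDerivAt_snd.comp_hasDerivAt (0 : ℝ) hc :)
  rw [hsymm] at hsnd
  refine ⟨fun t ↦ (c t).2, by simp only [hc0], hsnd, ?_⟩
  have hcU : ∀ᶠ t in 𝓝 0, (c t).1 ∈ U :=
    (continuous_fst.continuousAt.comp hc.continuousAt).eventually_mem
      (by simpa [hc0] using hU.mem_nhds hu)
  filter_upwards [hΦc, hcU] with t ht htU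
  have hft : f u + t • v + (c t).2 • m = f (c t).1 := by
    simp only [Φ, zero_smul, sub_zero] at ht
    rw [← ht, sub_add_cancel]
  exact hft ▸ hfS htU

theorem eventually_exists_mem_Icc {S : Set E3} (hS : IsSurface 1 S) {q ν m b : E3} {c : ℝ}
    (hq : q ∈ S) (hν : ∀ v, IsTangentAt S q v → ⟪ν, v⟫ = 0) (hb : |⟪ν, b⟫| < c * ⟪ν, m⟫)
    (hc : 0 ≤ c) : ∀ᶠ t : ℝ in 𝓝[>] 0, ∃ z ∈ Icc (-c) c, q + t • (b + z • m) ∈ S := by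
  have hm : 0 < ⟪ν, m⟫ := pos_of_mul_pos_right ((abs_nonneg _).trans_lt hb) hc
  set z₀ := -⟪ν, b⟫ / ⟪ν, m⟫
  have hv : ⟪ν, b + z₀ • m⟫ = 0 := by
    rw [inner_add_right, inner_smul_right, div_mul_cancel₀ _ hm.ne', add_neg_cancel]
  have hz₀ : z₀ ∈ Ioo (-c) c := by
    rwa [mem_Ioo, ← abs_lt, abs_div, abs_neg, abs_of_pos hm, div_lt_iff₀ hm]
  obtain ⟨h, h0, hh, hmem⟩ := hS.exists_graph hq hν hm.ne' hv
  have hslope : Tendsto (fun t ↦ z₀ + t⁻¹ * h t) (𝓝[>] 0) (𝓝 z₀) := by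
    simpa [h0] using hh.tendsto_slope_zero_right.const_add z₀
  filter_upwards [hslope.eventually (Icc_mem_nhds hz₀.1 hz₀.2), nhdsWithin_le_nhds hmem,
    self_mem_nhdsWithin] with t hz hS' ht
  refine ⟨_, hz, ?_⟩
  have hht : t • (t⁻¹ * h t) • m = h t • m := by
    rw [smul_smul, mul_inv_cancel_left₀ (ne_of_gt ht)]
  rwa [add_smul, ← add_assoc, smul_add, hht, ← add_assoc]

end IsSurface

theorem one_sub_inner_le_norm_sub {E : Type*} [NormedAddCommGroup E] [InnerProductSpace ℝ E]
    {y : E} (hy : ‖y‖ = 1) (x : E) : 1 - ⟪x, y⟫ ≤ ‖x - y‖ := by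
  have h : ⟪x - y, y⟫ = ⟪x, y⟫ - 1 := by simp [inner_sub_left, hy]
  linarith [neg_le_of_abs_le (h ▸ hy ▸ abs_real_inner_le_norm (x - y) y)]

theorem subsingleton_diff_union_of_mem_nhdsLT_nhdsGT {I U V : Set ℝ} (hI : I.OrdConnected)
    (hV : IsOpen V) (hU : IsOpen U) (hUV : Disjoint U V)
    (h : ∀ s ∈ I \ (U ∪ V), U ∈ 𝓝[<] s ∧ V ∈ 𝓝[>] s) : (I \ (U ∪ V)).Subsingleton := by
  suffices hle : ∀ a ∈ I \ (U ∪ V), ∀ b ∈ I \ (U ∪ V), b ≤ a from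
    fun a ha b hb ↦ (hle b hb a ha).antisymm (hle a ha b hb)
  intro a ha b hb
  by_contra! hab
  obtain ⟨u, hau, hu⟩ := mem_nhdsGT_iff_exists_Ioo_subset.1 (h a ha).2
  have hbV : b ∉ V := fun hbV ↦ hb.2 (.inr hbV)
  obtain ⟨c, ⟨⟨hcu, hcb⟩, hcV⟩, hleast⟩ := (isCompact_Icc.diff hV).exists_isLeast
    ⟨b, right_mem_Icc.2 (min_le_right u b), hbV⟩
  have hac : a < c := (lt_min hau hab).trans_le hcu
  have hVc : V ∈ 𝓝[<] c := mem_of_superset (Ioo_mem_nhdsLT hac) fun s hs ↦ by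
    by_contra hsV
    rcases lt_or_ge s (min u b) with hsu | hsu
    · exact hsV (hu ⟨hs.1, hsu.trans_le (min_le_left u b)⟩)
    · exact hs.2.not_ge (hleast ⟨⟨hsu, hs.2.le.trans hcb⟩, hsV⟩)
  have hUc : U ∈ 𝓝[<] c := by
    by_cases hcU : c ∈ U
    · exact mem_nhdsWithin_of_mem_nhds (hU.mem_nhds hcU)
    · exact (h c ⟨hI.out ha.1 hb.1 ⟨hac.le, hcb⟩, by simp [hcU, hcV]⟩).1
  obtain ⟨s, hsU, hsV⟩ := Filter.nonempty_of_mem (inter_mem hUc hVc)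
  exact hUV.notMem_of_mem_left hsU hsV

namespace HasOuterNormal

variable {S Ωm Ωp : Set E3} {n : E3 → E3}

theorem exists_norm_normal_sub_lt (hS : HasOuterNormal S Ωm Ωp n) {p : E3} (hp : p ∈ S) {η : ℝ}
    (hη : 0 < η) : ∃ r > 0, ∀ q ∈ S, dist q p < r → ‖n q - n p‖ < η := by
  simpa only [dist_eq_norm] using Metric.continuousOn_iff.1 hS.continuousOn p hp η hη

theorem exists_abs_inner_lt (hS : HasOuterNormal S Ωm Ωp n) {p : E3} (hp : p ∈ S) {δ : ℝ}
    (hδ : 0 < δ) (hδ1 : δ ≤ 1) :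
    ∃ r > 0, ∀ q ∈ S, dist q p < r → ∀ b ≠ 0, ⟪n p, b⟫ = 0 →
      |⟪n q, b⟫| < δ * ‖b‖ * ⟪n q, n p⟫ := by
  obtain ⟨r, hr, hn⟩ := hS.exists_norm_normal_sub_lt hp (half_pos hδ)
  refine ⟨r, hr, fun q hq hqp b hb0 hb ↦ ?_⟩
  have hbpos : 0 < ‖b‖ := norm_pos_iff.2 hb0
  have hnq := hn q hq hqp
  have h := one_sub_inner_le_norm_sub (hS.norm_eq_one p hp) (n q)
  calc |⟪n q, b⟫| ≤ ‖n q - n p‖ * ‖b‖ := by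
        simpa [inner_sub_left, hb] using abs_real_inner_le_norm (n q - n p) b
    _ < δ / 2 * ‖b‖ := by gcongr
    _ ≤ δ * ‖b‖ * ⟪n q, n p⟫ := by nlinarith [mul_pos hδ hbpos]

/-- Move along `S` from `x`, keeping the tangential direction `b`: the slope never exceeds `δ`, so
the continuation never stops. -/
theorem exists_add_smul_normal_mem (hS : HasOuterNormal S Ωm Ωp n) {p : E3} (hp : p ∈ S) {δ : ℝ}
    (hδ : 0 < δ) (hδ1 : δ ≤ 1) :
    ∃ r > 0, ∀ x ∈ S, dist x p < r → ∀ b, ⟪n p, b⟫ = 0 → ‖b‖ < r →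
      ∃ z, |z| ≤ δ * ‖b‖ ∧ x + b + z • n p ∈ S := by
  obtain ⟨R, hR, hslope⟩ := hS.exists_abs_inner_lt hp hδ hδ1
  refine ⟨R / 3, by positivity, fun x hx hxp b hb hbR ↦ ?_⟩
  rcases eq_or_ne b 0 with rfl | hb0
  · exact ⟨0, by simpa using hx⟩
  let K : Set E3 := (fun z : ℝ ↦ b + z • n p) '' Icc (-(δ * ‖b‖)) (δ * ‖b‖)
  have hK : IsCompact K := isCompact_Icc.image (by fun_prop)
  have hKconv : Convex ℝ K := by
    simpa [K, image_image] using ((convex_Icc (-(δ * ‖b‖)) (δ * ‖b‖)).linear_image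
      (LinearMap.toSpanSingleton ℝ E3 (n p))).translate b
  have hKne : K.Nonempty := (nonempty_Icc.2 (neg_le_self (by positivity))).image _
  have hstep : ∀ s ∈ Ico (0 : ℝ) 1, ∀ k ∈ K, x + s • k ∈ S →
      ∀ᶠ t : ℝ in 𝓝[>] 0, ∃ k' ∈ K, x + s • k + t • k' ∈ S := by
    rintro s hs - ⟨z, hz, rfl⟩ hq
    have hqp : dist (x + s • (b + z • n p)) p < R := by
      have hz' : ‖z • n p‖ ≤ ‖b‖ := by
        rw [norm_smul, hS.norm_eq_one p hp, mul_one]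
        exact (abs_le.2 hz).trans (mul_le_of_le_one_left (norm_nonneg b) hδ1)
      calc dist (x + s • (b + z • n p)) p ≤ ‖s • (b + z • n p)‖ + dist x p := by
            simpa using dist_triangle (x + s • (b + z • n p)) x p
        _ ≤ 1 * (‖b‖ + ‖b‖) + dist x p := by
            rw [norm_smul, Real.norm_of_nonneg hs.1]
            gcongr
            exacts [hs.2.le, (norm_add_le _ _).trans (by gcongr)]
        _ < R := by linarith
    filter_upwards [hS.isSurface.eventually_exists_mem_Icc hq (hS.inner_eq_zero _ hq)
      (hslope _ hq hqp b hb0 hb) (by positivity)] with t ⟨z', hz', ht⟩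
    exact ⟨_, ⟨z', hz', rfl⟩, ht⟩
  obtain ⟨-, ⟨z, hz, rfl⟩, hzS⟩ := exists_mem_add_mem_of_forall_step hS.isCompact.isClosed hK
    hKconv hKne hx hstep
  exact ⟨z, abs_le.2 hz, by rwa [add_assoc]⟩

theorem exists_abs_inner_sub_le (hS : HasOuterNormal S Ωm Ωp n) {p : E3} (hp : p ∈ S)
    {Y : Set E3} {ρ : ℝ} (hρ : 0 < ρ)
    (hY : ∀ y ∈ Y, dist y p < ρ → ∀ t, |t| < ρ → y + t • n p ∈ S → t = 0) {δ : ℝ} (hδ : 0 < δ)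
    (hδ1 : δ ≤ 1) :
    ∃ r > 0, ∀ x ∈ S, ∀ y ∈ Y, dist x p < r → dist y p < r →
      |⟪n p, x - y⟫| ≤ δ * ‖x - y‖ := by
  obtain ⟨r, hr, hlift⟩ := hS.exists_add_smul_normal_mem hp hδ hδ1
  refine ⟨min r ρ / 4, by positivity, fun x hx y hy hxp hyp ↦ ?_⟩
  have hr' := min_le_left r ρ
  have hρ' := min_le_right r ρ
  set u := y - x
  set b := (ℝ ∙ n p)ᗮ.starProjection u
  have hbu : b = u - ⟪n p, u⟫ • n p :=
    starProjection_orthogonal_unit_singleton (hS.norm_eq_one p hp) u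
  have hu : ‖u‖ < min r ρ / 2 := by
    linarith [dist_triangle_right y x p, dist_eq_norm y x]
  have hb : ⟪n p, b⟫ = 0 :=
    Submodule.mem_orthogonal_singleton_iff_inner_right.1 (Submodule.starProjection_apply_mem _ u)
  have hbu' : ‖b‖ ≤ ‖u‖ := Submodule.norm_starProjection_apply_le _ u
  obtain ⟨z, hz, hzS⟩ := hlift x hx (by linarith) b hb (by linarith)
  have hzu : |z| ≤ δ * ‖u‖ := hz.trans (by gcongr)
  have hinner : |⟪n p, u⟫| ≤ ‖u‖ := by
    simpa [hS.norm_eq_one p hp] using abs_real_inner_le_norm (n p) u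
  have heq : z - ⟪n p, u⟫ = 0 := by
    refine hY y hy (by linarith) _ ?_ ?_
    · have := abs_sub z ⟪n p, u⟫
      nlinarith [norm_nonneg u]
    · convert hzS using 1
      rw [hbu]
      simp only [u]
      module
  rw [← norm_neg, neg_sub, ← abs_neg, ← inner_neg_right, neg_sub, ← sub_eq_zero.1 heq]
  exact hzu

theorem closure_eq (hS : HasOuterNormal S Ωm Ωp n) : closure Ωm = Ωm ∪ S := by
  rw [closure_eq_self_union_frontier, hS.fr]

theorem isOpen_exterior (hS : HasOuterNormal S Ωm Ωp n) : IsOpen Ωp := by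
  rw [hS.plus, ← hS.closure_eq]
  exact isClosed_closure.isOpen_compl

theorem disjoint_interior_exterior (hS : HasOuterNormal S Ωm Ωp n) : Disjoint Ωm Ωp := by
  rw [hS.plus]
  exact disjoint_compl_right.mono_left subset_union_left

theorem notMem_iff (hS : HasOuterNormal S Ωm Ωp n) {x : E3} : x ∉ S ↔ x ∈ Ωm ∪ Ωp := by
  have hdisj : Disjoint Ωm S := by
    rw [← hS.fr, hS.openm.frontier_eq]
    exact disjoint_sdiff_right
  have := hdisj.notMem_of_mem_left (a := x)
  simp only [hS.plus, mem_union, mem_compl_iff]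
  tauto

theorem exists_abs_inner_sub_self_le (hS : HasOuterNormal S Ωm Ωp n) {p : E3} (hp : p ∈ S) {δ : ℝ}
    (hδ : 0 < δ) (hδ1 : δ ≤ 1) :
    ∃ r > 0, ∀ x ∈ S, dist x p < r → |⟪n p, x - p⟫| ≤ δ * ‖x - p‖ := by
  obtain ⟨ρ, hρ, hout⟩ := hS.outward p hp
  have hline : ∀ t, |t| < ρ → p + t • n p ∈ S → t = 0 := fun t ht htS ↦ by
    by_contra hne
    refine hS.notMem_iff.2 ?_ htS
    rcases lt_or_gt_of_ne hne with hneg | hpos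
    · left
      simpa using (hout (-t) (neg_pos.2 hneg) (by rwa [← abs_of_neg hneg])).2
    · exact .inr (hout t hpos (by rwa [← abs_of_pos hpos])).1
  obtain ⟨r, hr, h⟩ := hS.exists_abs_inner_sub_le hp (Y := {p}) hρ
    (by rintro y rfl -; exact hline) hδ hδ1
  exact ⟨r, hr, fun x hx hxp ↦ h x hx p rfl hxp (by simpa)⟩

theorem eventually_forall_add_smul_notMem (hS : HasOuterNormal S Ωm Ωp n) {q : E3} (hq : q ∈ S)
    {K : Set E3} (hK : IsCompact K) (hpos : ∀ w ∈ K, 0 < ⟪n q, w⟫) :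
    ∀ᶠ s : ℝ in 𝓝[≠] 0, ∀ w ∈ K, q + s • w ∉ S := by
  obtain ⟨m, hm, hmK⟩ := hK.exists_forall_le' (f := fun w ↦ ⟪n q, w⟫) (by fun_prop) hpos
  obtain ⟨R, hR, hRK⟩ := hK.isBounded.exists_pos_norm_le
  obtain ⟨r, hr, hcone⟩ := hS.exists_abs_inner_sub_self_le hq
    (δ := min 1 (m / (2 * R))) (by positivity) (min_le_left _ _)
  have hsmall : ∀ᶠ s : ℝ in 𝓝[≠] 0, |s| < r / R := nhdsWithin_le_nhds <| by
    simpa [Metric.ball] using Metric.ball_mem_nhds (0 : ℝ) (div_pos hr hR)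
  filter_upwards [hsmall, self_mem_nhdsWithin] with s hs hs0 w hw hwS
  have hspos : 0 < |s| := abs_pos.2 hs0
  have hdist : dist (q + s • w) q < r := by
    rw [dist_self_add_left, norm_smul, Real.norm_eq_abs]
    exact (mul_le_mul_of_nonneg_left (hRK w hw) hspos.le).trans_lt ((lt_div_iff₀ hR).1 hs)
  have h := hcone _ hwS hdist
  rw [add_sub_cancel_left, inner_smul_right, abs_mul, norm_smul, Real.norm_eq_abs, mul_left_comm,
    mul_le_mul_iff_right₀ hspos] at h
  refine h.not_gt ?_
  calc min 1 (m / (2 * R)) * ‖w‖ ≤ m / (2 * R) * R := by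
        gcongr
        exacts [min_le_right _ _, hRK w hw]
    _ = m / 2 := by field_simp
    _ < |⟪n q, w⟫| := (half_lt_self hm).trans_le ((hmK w hw).trans (le_abs_self _))

/-- For small `s ≠ 0` the segment from `q + s • n q` to `q + s • v` misses `S`, so its endpoints lie
in the same region. -/
theorem eventually_add_smul_mem (hS : HasOuterNormal S Ωm Ωp n) {q v : E3} (hq : q ∈ S)
    (hv : 0 < ⟪n q, v⟫) :
    ∀ᶠ t : ℝ in 𝓝[>] 0, q + t • v ∈ Ωp ∧ q - t • v ∈ Ωm := by
  have hpos : ∀ w ∈ segment ℝ (n q) v, 0 < ⟪n q, w⟫ := by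
    refine (convex_halfSpace_gt (f := fun w ↦ ⟪n q, w⟫) ?_ 0).segment_subset ?_ hv
    · exact ⟨fun _ _ ↦ inner_add_right .., fun _ _ ↦ inner_smul_right ..⟩
    · simp [hS.norm_eq_one q hq]
  have hcpt : IsCompact (segment ℝ (n q) v) := by
    rw [segment_eq_image_lineMap]
    exact isCompact_Icc.image AffineMap.lineMap_continuous
  have hoff := hS.eventually_forall_add_smul_notMem hq hcpt hpos
  have hside {s : ℝ} (hs : ∀ w ∈ segment ℝ (n q) v, q + s • w ∉ S) :
      (q + s • n q ∈ Ωm ∧ q + s • v ∈ Ωm) ∨ (q + s • n q ∈ Ωp ∧ q + s • v ∈ Ωp) := by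
    have hconn : IsPreconnected ((fun w ↦ q + s • w) '' segment ℝ (n q) v) :=
      (convex_segment _ _).isPreconnected.image _ (by fun_prop)
    have hcover : (fun w ↦ q + s • w) '' segment ℝ (n q) v ⊆ Ωm ∪ Ωp :=
      image_subset_iff.2 fun w hw ↦ hS.notMem_iff.1 (hs w hw)
    simpa [image_subset_iff] using (hconn.subset_or_subset hS.openm hS.isOpen_exterior
      hS.disjoint_interior_exterior hcover).imp
      (fun h ↦ And.intro (h (mem_image_of_mem _ (left_mem_segment ℝ _ _)))
        (h (mem_image_of_mem _ (right_mem_segment ℝ _ _))))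
      (fun h ↦ And.intro (h (mem_image_of_mem _ (left_mem_segment ℝ _ _)))
        (h (mem_image_of_mem _ (right_mem_segment ℝ _ _))))
  obtain ⟨ε, hε, hout⟩ := hS.outward q hq
  have hneg : Tendsto (fun t : ℝ ↦ -t) (𝓝[>] 0) (𝓝[≠] 0) := by
    refine tendsto_nhdsWithin_iff.2 ⟨?_, ?_⟩
    · simpa using (continuous_neg.tendsto (0 : ℝ)).mono_left nhdsWithin_le_nhds
    · filter_upwards [self_mem_nhdsWithin] with t ht using neg_ne_zero.2 (ne_of_gt ht)
  filter_upwards [hneg.eventually hoff, nhdsWithin_mono _ (fun t ht ↦ ne_of_gt ht) hoff,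
    Ioo_mem_nhdsGT hε] with t hoffm hoffp ht
  obtain ⟨hp, hm⟩ := hout t ht.1 ht.2
  have hdisj {x : E3} : x ∈ Ωm → x ∉ Ωp := fun h ↦
    hS.disjoint_interior_exterior.notMem_of_mem_left h
  refine ⟨((hside hoffp).resolve_left fun h ↦ hdisj h.1 hp).2, ?_⟩
  rw [sub_eq_add_neg, ← neg_smul] at hm ⊢
  exact ((hside hoffm).resolve_right fun h ↦ hdisj hm h.1).2

theorem exists_eq_zero_of_add_smul_normal_mem (hS : HasOuterNormal S Ωm Ωp n) {p : E3}
    (hp : p ∈ S) :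
    ∃ ρ > 0, ∀ y ∈ S, dist y p < ρ → ∀ t, |t| < ρ → y + t • n p ∈ S → t = 0 := by
  obtain ⟨r, hr, hn⟩ := hS.exists_norm_normal_sub_lt hp one_pos
  refine ⟨r / 2, by positivity, fun y hy hyp t ht htS ↦ ?_⟩
  let line : ℝ → E3 := fun s ↦ y + s • n p
  have hline : Continuous line := by fun_prop
  have hmem {s : ℝ} : s ∈ Ioo (-(r / 2)) (r / 2) \ (line ⁻¹' Ωm ∪ line ⁻¹' Ωp) ↔
      |s| < r / 2 ∧ line s ∈ S := by
    rw [Set.mem_sdiff, ← preimage_union, mem_preimage, ← hS.notMem_iff, not_not, mem_Ioo, ← abs_lt]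
  have hcross : ∀ s ∈ Ioo (-(r / 2)) (r / 2) \ (line ⁻¹' Ωm ∪ line ⁻¹' Ωp),
      line ⁻¹' Ωm ∈ 𝓝[<] s ∧ line ⁻¹' Ωp ∈ 𝓝[>] s := by
    intro s hs
    obtain ⟨hsr, hsS⟩ := hmem.1 hs
    have hdist : dist (line s) p < r := by
      have h : dist (line s) y = |s| := by simp [line, norm_smul, hS.norm_eq_one p hp]
      linarith [dist_triangle (line s) y p]
    have hpos : 0 < ⟪n (line s), n p⟫ := by
      linarith [one_sub_inner_le_norm_sub (hS.norm_eq_one p hp) (n (line s)), hn _ hsS hdist]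
    have h := hS.eventually_add_smul_mem hsS hpos
    have hadd (u : ℝ) : line (s + u) = line s + u • n p := by simp only [line]; module
    have hsub (u : ℝ) : line (s - u) = line s - u • n p := by simp only [line]; module
    have hlt : 𝓝[<] s = map (s - ·) (𝓝[>] 0) := by simp [map_subLeft_nhdsGT]
    have hgt : 𝓝[>] s = map (s + ·) (𝓝[>] 0) := by simp [map_add_left_nhdsGT]
    rw [hlt, hgt]
    exact ⟨h.mono fun u hu ↦ by simpa only [mem_preimage, hsub] using hu.2,
      h.mono fun u hu ↦ by simpa only [mem_preimage, hadd] using hu.1⟩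
  refine subsingleton_diff_union_of_mem_nhdsLT_nhdsGT ordConnected_Ioo
    (hS.isOpen_exterior.preimage hline) (hS.openm.preimage hline)
    (hS.disjoint_interior_exterior.preimage line) hcross (hmem.2 ⟨ht, htS⟩) (hmem.2 ⟨?_, ?_⟩)
  · simpa using hr
  · simpa [line] using hy

theorem exists_norm_sub_starProjection_le (hS : HasOuterNormal S Ωm Ωp n) {p : E3} (hp : p ∈ S)
    {δ : ℝ} (hδ : 0 < δ) (hδ1 : δ ≤ 1) :
    ∃ r > 0, ∀ x ∈ S ∩ Metric.ball p r, ∀ y ∈ S ∩ Metric.ball p r,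
      ‖x - y - (ℝ ∙ n p)ᗮ.starProjection (x - y)‖ ≤ δ * ‖x - y‖ := by
  obtain ⟨ρ, hρ, huniq⟩ := hS.exists_eq_zero_of_add_smul_normal_mem hp
  obtain ⟨r, hr, hflat⟩ := hS.exists_abs_inner_sub_le hp hρ huniq hδ hδ1
  refine ⟨r, hr, fun x hx y hy ↦ ?_⟩
  rw [starProjection_orthogonal_unit_singleton (hS.norm_eq_one p hp), sub_sub_cancel, norm_smul,
    hS.norm_eq_one p hp, mul_one]
  exact hflat x hx.1 y hy.1 hx.2 hy.2

theorem hausdorffMeasure_lt_top (hS : HasOuterNormal S Ωm Ωp n) : μH[2] S < ⊤ := by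
  refine hS.isCompact.measure_lt_top_of_nhdsWithin fun p hp ↦ ?_
  obtain ⟨r, hr, hflat⟩ := hS.exists_norm_sub_starProjection_le hp one_half_pos (by norm_num)
  refine ⟨S ∩ Metric.ball p r, inter_mem_nhdsWithin S (Metric.ball_mem_nhds p hr), ?_⟩
  have h := hausdorffMeasure_lt_top_of_norm_sub_starProjection_le
    (Metric.isBounded_ball.subset inter_subset_right) one_half_lt_one hflat
  rwa [finrank_orthogonal_singleton_of_norm_eq_one (hS.norm_eq_one p hp), Nat.cast_ofNat] at h

theorem hausdorffMeasure_pos (hS : HasOuterNormal S Ωm Ωp n) (hne : S.Nonempty) : 0 < μH[2] S := by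
  obtain ⟨p, hp⟩ := hne
  set H := (ℝ ∙ n p)ᗮ
  obtain ⟨r, hr, hlift⟩ := hS.exists_add_smul_normal_mem hp one_pos le_rfl
  have hcover : Metric.ball (H.orthogonalProjectionOnto p) r ⊆ H.orthogonalProjectionOnto '' S := by
    intro w hw
    set b : H := w - H.orthogonalProjectionOnto p
    obtain ⟨z, -, hzS⟩ := hlift p hp (by simpa) b
      (Submodule.mem_orthogonal_singleton_iff_inner_right.1 b.2)
      (by simpa [b, dist_eq_norm] using hw)
    refine ⟨_, hzS, ?_⟩
    have hn : H.orthogonalProjectionOnto (n p) = 0 := by simp [H]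
    have hb : H.orthogonalProjectionOnto (b : E3) = b := by simp
    rw [map_add, map_add, hb, map_smul, hn, smul_zero, add_zero, add_sub_cancel]
  have hball : 0 < μH[2] (Metric.ball (H.orthogonalProjectionOnto p) r) := by
    have h := Metric.measure_ball_pos (μH[Module.finrank ℝ H]) (H.orthogonalProjectionOnto p) hr
    rwa [finrank_orthogonal_singleton_of_norm_eq_one (hS.norm_eq_one p hp), Nat.cast_ofNat] at h
  calc 0 < μH[2] (Metric.ball (H.orthogonalProjectionOnto p) r) := hball
    _ ≤ μH[2] (H.orthogonalProjectionOnto '' S) := measure_mono hcover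
    _ ≤ μH[2] S := by
      simpa using H.lipschitzWith_orthogonalProjectionOnto.hausdorffMeasure_image_le zero_le_two S

end HasOuterNormal

theorem tendsto_mul_const_nhdsGT_zero (c : ℝ) :
    Tendsto (fun t : ℝ ↦ t * c) (𝓝[>] 0) (𝓝 0) := by
  simpa using ((continuous_mul_const c).tendsto 0).mono_left nhdsWithin_le_nhds

theorem eventually_slope_infDist_lt {E : Type*} [NormedAddCommGroup E] [NormedSpace ℝ E]
    {S : Set E} {c γ : ℝ → E} {v w y : E} {t r : ℝ} (hc : HasDerivWithinAt c v (Ici t) t)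
    (hy : Metric.infDist (c t) S = dist (c t) y) (hγS : ∀ s, γ s ∈ S) (hγ0 : γ 0 = y)
    (hγ : HasDerivAt γ w 0) (hr : ‖v - w‖ < r) :
    ∀ᶠ z in 𝓝[>] t, (z - t)⁻¹ * (Metric.infDist (c z) S - Metric.infDist (c t) S) < r := by
  have hγt : HasDerivWithinAt (fun z ↦ γ (z - t)) w (Ici t) t := by
    have hγ' : HasDerivAt γ w (t - t) := by simpa using hγ
    exact (hγ'.comp_sub_const t t).hasDerivWithinAt
  have hslope := nhdsWithin_mono t Ioi_subset_Ici_self ((hc.sub hγt).limsup_slope_norm_le hr)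
  filter_upwards [hslope, self_mem_nhdsWithin] with z hz (htz : t < z)
  refine lt_of_le_of_lt ?_ hz
  rw [Real.norm_of_nonneg (sub_pos.2 htz).le]
  have hz' : Metric.infDist (c z) S ≤ ‖c z - γ (z - t)‖ :=
    dist_eq_norm (c z) _ ▸ Metric.infDist_le_dist_of_mem (hγS (z - t))
  have ht : Metric.infDist (c t) S = ‖c t - γ (t - t)‖ := by
    rw [hy, sub_self, hγ0, dist_eq_norm]
  have : 0 ≤ (z - t)⁻¹ := inv_nonneg.2 (sub_pos.2 htz).le
  simp only [Pi.sub_apply, ht]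
  gcongr

/-- `α x` is, for times in `[0, 1]`, the integral curve of the vector field `X` starting at `x`. -/
structure IsFlow {E : Type*} [NormedAddCommGroup E] [NormedSpace ℝ E]
    (X : E → E) (α : E → ℝ → E) : Prop where
  map_zero : ∀ x, α x 0 = x
  hasDerivWithinAt : ∀ x, ∀ t ∈ Icc (0 : ℝ) 1, HasDerivWithinAt (α x) (X (α x t)) (Icc 0 1) t

namespace IsFlow

variable {E : Type*} [NormedAddCommGroup E] [NormedSpace ℝ E] {X : E → E} {α : E → ℝ → E}
  {K L : NNReal}

theorem exists_of_lipschitzWith [CompleteSpace E] (hX : LipschitzWith K X)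
    (hL : ∀ x, ‖X x‖ ≤ L) : ∃ α, IsFlow X α := by
  have hcurve (x : E) : ∃ c : ℝ → E, c 0 = x ∧
      ∀ t ∈ Icc (0 : ℝ) 1, HasDerivWithinAt c (X (c t)) (Icc 0 1) t := by
    have hp : IsPicardLindelof (fun _ ↦ X) (⟨0, by simp⟩ : Icc (0 : ℝ) 1) x L 0 L K :=
      IsPicardLindelof.of_time_independent (fun y _ ↦ hL y) hX.lipschitzOnWith (by simp)
    exact hp.exists_eq_forall_mem_Icc_hasDerivWithinAt₀
  choose α hα0 hα using hcurve
  exact ⟨α, hα0, hα⟩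

theorem continuousOn (h : IsFlow X α) (x : E) : ContinuousOn (α x) (Icc 0 1) :=
  fun t ht ↦ (h.hasDerivWithinAt x t ht).continuousWithinAt

theorem hasDerivWithinAt_Ici (h : IsFlow X α) (x : E) :
    ∀ t ∈ Ico (0 : ℝ) 1, HasDerivWithinAt (α x) (X (α x t)) (Ici t) t := fun t ht ↦
  (h.hasDerivWithinAt x t (Ico_subset_Icc_self ht)).mono_of_mem_nhdsWithin
    (Icc_mem_nhdsGE_of_mem ht)

/-- By Grönwall, since the distance to `S` grows at most at rate `K` times itself: compare with a
curve in `S` through a nearest point. -/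
theorem mem_of_isCompact (h : IsFlow X α) (hX : LipschitzWith K X) {S : Set E} (hS : IsCompact S)
    (htan : ∀ p ∈ S, ∃ γ : ℝ → E, (∀ t, γ t ∈ S) ∧ γ 0 = p ∧ HasDerivAt γ (X p) 0)
    {x : E} (hx : x ∈ S) {t : ℝ} (ht : t ∈ Icc (0 : ℝ) 1) : α x t ∈ S := by
  have hne : S.Nonempty := ⟨x, hx⟩
  have hbound := le_gronwallBound_of_liminf_deriv_right_le
    (f := fun t ↦ Metric.infDist (α x t) S) (f' := fun t ↦ K * Metric.infDist (α x t) S)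
    (δ := 0) (K := K) (ε := 0) (a := 0) (b := 1)
    ((Metric.continuous_infDist_pt S).comp_continuousOn (h.continuousOn x)) ?_
    (by simp [h.map_zero, Metric.infDist_zero_of_mem hx]) (fun s _ ↦ by simp) t ht
  · rw [gronwallBound_ε0_δ0] at hbound
    exact (hS.isClosed.mem_iff_infDist_zero hne).2 (hbound.antisymm Metric.infDist_nonneg)
  · intro s hs r hr
    obtain ⟨y, hy, hyd⟩ := hS.exists_infDist_eq_dist hne (α x s)
    obtain ⟨γ, hγS, hγ0, hγ⟩ := htan y hy
    have hXr : ‖X (α x s) - X y‖ < r := by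
      rw [← dist_eq_norm]
      exact (hX.dist_le_mul (α x s) y).trans_lt (hyd ▸ hr)
    exact (eventually_slope_infDist_lt (h.hasDerivWithinAt_Ici x s hs) hyd hγS hγ0 hγ
      hXr).frequently

theorem norm_sub_le (h : IsFlow X α) (hX : LipschitzWith K X) (x y : E) {t : ℝ}
    (ht : t ∈ Icc (0 : ℝ) 1) : ‖α x t - α y t‖ ≤ Real.exp K * ‖x - y‖ := by
  have hdist := dist_le_of_trajectories_ODE (v := fun _ ↦ X) (fun _ ↦ hX) (h.continuousOn x)
    (h.hasDerivWithinAt_Ici x) (h.continuousOn y) (h.hasDerivWithinAt_Ici y) (δ := ‖x - y‖)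
    (by rw [h.map_zero, h.map_zero, dist_eq_norm]) t ht
  rw [dist_eq_norm, sub_zero, mul_comm] at hdist
  have : (K : ℝ) * t ≤ K := mul_le_of_le_one_right K.2 ht.2
  exact hdist.trans (by gcongr)

theorem norm_sub_sub_le (h : IsFlow X α) (hX : LipschitzWith K X) (x y : E) {t : ℝ}
    (ht : t ∈ Icc (0 : ℝ) 1) :
    ‖α x t - α y t - (x - y)‖ ≤ t * (K * Real.exp K) * ‖x - y‖ := by
  have hmvt := norm_image_sub_le_of_norm_deriv_le_segment'
    (fun s hs ↦ (h.hasDerivWithinAt x s hs).sub (h.hasDerivWithinAt y s hs))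
    (C := K * (Real.exp K * ‖x - y‖)) (fun s hs ↦ ?_) t ht
  · simp only [Pi.sub_apply, h.map_zero, sub_zero] at hmvt
    linarith
  · rw [← dist_eq_norm]
    refine (hX.dist_le_mul _ _).trans ?_
    rw [dist_eq_norm]
    gcongr
    exact h.norm_sub_le hX x y (Ico_subset_Icc_self hs)

theorem norm_sub_self_le (h : IsFlow X α) (hL : ∀ x, ‖X x‖ ≤ L) (x : E) {t : ℝ}
    (ht : t ∈ Icc (0 : ℝ) 1) : ‖α x t - x‖ ≤ L * t := by
  simpa [h.map_zero] using
    norm_image_sub_le_of_norm_deriv_le_segment' (h.hasDerivWithinAt x) (fun s _ ↦ hL (α x s)) t ht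

theorem continuous_map (h : IsFlow X α) (hX : LipschitzWith K X) {t : ℝ}
    (ht : t ∈ Icc (0 : ℝ) 1) : Continuous fun x ↦ α x t := by
  refine (LipschitzWith.of_dist_le_mul (K := (Real.exp K).toNNReal) fun x y ↦ ?_).continuous
  rw [dist_eq_norm, dist_eq_norm, Real.coe_toNNReal _ (Real.exp_pos _).le]
  exact h.norm_sub_le hX x y ht

theorem injective_map (h : IsFlow X α) (hX : LipschitzWith K X) {t : ℝ}
    (ht : t ∈ Icc (0 : ℝ) 1) (htK : t * (K * Real.exp K) < 1) :
    Function.Injective fun x ↦ α x t := by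
  intro x y (hxy : α x t = α y t)
  have hle := h.norm_sub_sub_le hX x y ht
  rw [hxy, sub_self, zero_sub, norm_neg] at hle
  have hnorm : ‖x - y‖ ≤ 0 := by nlinarith [norm_nonneg (x - y)]
  exact sub_eq_zero.1 (norm_le_zero_iff.1 hnorm)

theorem norm_map_sub_sub_fderiv_le (h : IsFlow X α) (hX : LipschitzWith K X)
    (hd : Differentiable ℝ X) {q x y : E} {s ρ η : ℝ} (hs : s ∈ Icc (0 : ℝ) 1)
    (hρ : ∀ z ∈ Metric.ball q ρ, ‖fderiv ℝ X z - fderiv ℝ X q‖ ≤ η)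
    (hx : α x s ∈ Metric.ball q ρ) (hy : α y s ∈ Metric.ball q ρ) :
    ‖X (α x s) - X (α y s) - fderiv ℝ X q (x - y)‖
      ≤ (η * Real.exp K + s * (K ^ 2 * Real.exp K)) * ‖x - y‖ := by
  set A := fderiv ℝ X q
  have hη : 0 ≤ η := (norm_nonneg _).trans (hρ _ hx)
  have hXA : ‖X (α x s) - X (α y s) - A (α x s - α y s)‖ ≤ η * ‖α x s - α y s‖ :=
    Convex.norm_image_sub_le_of_norm_fderiv_le' (𝕜 := ℝ) (fun z _ ↦ hd z) hρ (convex_ball q ρ)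
      hy hx
  calc ‖X (α x s) - X (α y s) - A (x - y)‖
      = ‖(X (α x s) - X (α y s) - A (α x s - α y s)) + A (α x s - α y s - (x - y))‖ := by
        rw [map_sub A (α x s - α y s)]; abel_nf
    _ ≤ η * ‖α x s - α y s‖ + ‖A‖ * ‖α x s - α y s - (x - y)‖ :=
        (norm_add_le _ _).trans (add_le_add hXA (A.le_opNorm _))
    _ ≤ η * (Real.exp K * ‖x - y‖) + K * (s * (K * Real.exp K) * ‖x - y‖) := by
        gcongr
        · exact h.norm_sub_le hX x y hs
        · exact norm_fderiv_le_of_lipschitz ℝ hX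
        · exact h.norm_sub_sub_le hX x y hs
    _ = _ := by ring

theorem eventually_norm_sub_sub_smul_fderiv_le (h : IsFlow X α) (hX : LipschitzWith K X)
    (hL : ∀ x, ‖X x‖ ≤ L) (hd : Differentiable ℝ X) (hu : UniformContinuous (fderiv ℝ X)) {ε : ℝ}
    (hε : 0 < ε) : ∀ᶠ t : ℝ in 𝓝[>] 0, ∀ q, ∀ x ∈ Metric.ball q t, ∀ y ∈ Metric.ball q t,
      ‖α x t - α y t - (x - y) - (t • fderiv ℝ X q) (x - y)‖ ≤ t * ε * ‖x - y‖ := by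
  obtain ⟨ρ, hρ, hDX⟩ :=
    Metric.uniformContinuous_iff.1 hu (ε / (2 * Real.exp K)) (by positivity)
  filter_upwards [Ioo_mem_nhdsGT one_pos,
    (tendsto_mul_const_nhdsGT_zero (K ^ 2 * Real.exp K)).eventually_lt_const (half_pos hε),
    (tendsto_mul_const_nhdsGT_zero (1 + L)).eventually_lt_const hρ]
    with t ⟨ht0, ht1⟩ htK htL q x hx y hy
  have hIcc : Icc 0 t ⊆ Icc (0 : ℝ) 1 := Icc_subset_Icc le_rfl ht1.le
  have hball {z : E} (hz : z ∈ Metric.ball q t) {s : ℝ} (hs : s ∈ Icc 0 t) :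
      α z s ∈ Metric.ball q ρ := by
    have hsL : (L : ℝ) * s ≤ L * t := by gcongr; exact hs.2
    have hmove := h.norm_sub_self_le hL z (hIcc hs)
    rw [Metric.mem_ball] at hz ⊢
    rw [← dist_eq_norm] at hmove
    linarith [dist_triangle (α z s) z q]
  have hmvt := norm_image_sub_le_of_norm_deriv_le_segment'
    (f := fun s ↦ α x s - α y s - s • fderiv ℝ X q (x - y))
    (f' := fun s ↦ X (α x s) - X (α y s) - (1 : ℝ) • fderiv ℝ X q (x - y))
    (a := 0) (b := t) (C := ε * ‖x - y‖)
    (fun s hs ↦ (((h.hasDerivWithinAt x s (hIcc hs)).sub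
      (h.hasDerivWithinAt y s (hIcc hs))).mono hIcc).sub
        ((hasDerivWithinAt_id s _).smul_const _)) (fun s hs ↦ ?_) t ⟨ht0.le, le_rfl⟩
  · simp only [h.map_zero, zero_smul, sub_zero] at hmvt
    rw [smul_apply, sub_right_comm]
    linarith
  · have hs' := Ico_subset_Icc_self hs
    have hle := h.norm_map_sub_sub_fderiv_le hX hd (hIcc hs')
      (fun z hz ↦ (dist_eq_norm _ (fderiv ℝ X q) ▸ hDX hz).le) (hball hx hs') (hball hy hs')
    rw [one_smul]
    refine hle.trans ?_
    gcongr
    have hη : ε / (2 * Real.exp K) * Real.exp K = ε / 2 := by field_simp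
    have hsK : s * (K ^ 2 * Real.exp K) ≤ t * (K ^ 2 * Real.exp K) := by gcongr; exact hs.2.le
    linarith

end IsFlow

theorem restrict_le_restrict_of_isCompact {X : Type*} [TopologicalSpace X] [MeasurableSpace X]
    {μ ν : Measure X} {S : Set X} (hS : IsCompact S)
    (h : ∀ p ∈ S, ∃ u ∈ 𝓝[S] p, MeasurableSet u ∧ μ.restrict u ≤ ν.restrict u) :
    μ.restrict S ≤ ν.restrict S := by
  have hmono {s u : Set X} (hsu : s ⊆ u) (hu : μ.restrict u ≤ ν.restrict u) :
      μ.restrict s ≤ ν.restrict s := by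
    rw [← Measure.restrict_restrict_of_subset (μ := μ) hsu,
      ← Measure.restrict_restrict_of_subset (μ := ν) hsu]
    exact Measure.restrict_mono_measure hu s
  suffices ∃ u, S ⊆ u ∧ MeasurableSet u ∧ μ.restrict u ≤ ν.restrict u by
    obtain ⟨u, hSu, -, hu⟩ := this
    exact hmono hSu hu
  refine hS.induction_on (p := fun s ↦ ∃ u, s ⊆ u ∧ MeasurableSet u ∧ μ.restrict u ≤ ν.restrict u)
    ⟨∅, Subset.rfl, .empty, by simp⟩ ?_ ?_ ?_
  · rintro s t hst ⟨u, htu, hu⟩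
    exact ⟨u, hst.trans htu, hu⟩
  · rintro s t ⟨u, hsu, hum, hu⟩ ⟨w, htw, hwm, hw⟩
    refine ⟨u ∪ w, union_subset_union hsu htw, hum.union hwm, ?_⟩
    rw [← union_sdiff_self, Measure.restrict_union disjoint_sdiff_right (hwm.diff hum),
      Measure.restrict_union disjoint_sdiff_right (hwm.diff hum)]
    exact add_le_add hu (hmono sdiff_subset hw)
  · intro p hp
    obtain ⟨u, hup, hu⟩ := h p hp
    exact ⟨u, hup, u, Subset.rfl, hu⟩

theorem setLIntegral_le_measure_image_of_isCompact {X : Type*} [TopologicalSpace X] [PolishSpace X]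
    [MeasurableSpace X] [BorelSpace X] {μ : Measure X} {S : Set X} (hS : IsCompact S) {φ : X → X}
    (hφ : Continuous φ) (hφi : Function.Injective φ) {f : X → ℝ≥0∞}
    (h : ∀ p ∈ S, ∃ u ∈ 𝓝[S] p, MeasurableSet u ∧
      ∀ a ⊆ u, MeasurableSet a → ∫⁻ x in a, f x ∂μ ≤ μ (φ '' a)) :
    ∫⁻ x in S, f x ∂μ ≤ μ (φ '' S) := by
  have hSm := hS.measurableSet
  have hφm : MeasurableEmbedding φ := hφ.measurableEmbedding hφi
  have hle : (μ.withDensity f).restrict S ≤ (μ.comap φ).restrict S := by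
    refine restrict_le_restrict_of_isCompact hS fun p hp ↦ ?_
    obtain ⟨u, hup, hum, hu⟩ := h p hp
    refine ⟨u, hup, hum, Measure.le_iff.2 fun a ha ↦ ?_⟩
    rw [Measure.restrict_apply ha, Measure.restrict_apply ha, withDensity_apply _ (ha.inter hum),
      hφm.comap_apply]
    exact hu _ inter_subset_right (ha.inter hum)
  simpa [hSm, hφm.comap_apply, withDensity_apply] using hle S

theorem ofReal_integral_le_lintegral_ofReal {X : Type*} [MeasurableSpace X] {μ : Measure X}
    {f : X → ℝ} (hf : Integrable f μ) :
    ENNReal.ofReal (∫ x, f x ∂μ) ≤ ∫⁻ x, ENNReal.ofReal (f x) ∂μ := by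
  rw [integral_eq_lintegral_pos_part_sub_lintegral_neg_part hf]
  exact (ENNReal.ofReal_le_ofReal (sub_le_self _ ENNReal.toReal_nonneg)).trans
    ENNReal.ofReal_toReal_le

section TangentialTrace

variable {E : Type*} [NormedAddCommGroup E] [InnerProductSpace ℝ E]

/-- The trace of the compression of `A` to the hyperplane orthogonal to the unit vector `u`. For
`A = DX(p)` and `u` the normal of a hypersurface at `p` it is the divergence of `X` along that
hypersurface. -/
def tangentialTrace (A : E →L[ℝ] E) (u : E) : ℝ := LinearMap.trace ℝ E A - ⟪A u, u⟫

theorem tangentialTrace_smul (t : ℝ) (A : E →L[ℝ] E) (u : E) :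
    tangentialTrace (t • A) u = t * tangentialTrace A u := by
  simp [tangentialTrace, inner_smul_left, mul_sub]

theorem tangentialTrace_neg (A : E →L[ℝ] E) (u : E) :
    tangentialTrace (-A) u = -tangentialTrace A u := by
  simp [tangentialTrace, neg_add_eq_sub]

variable [FiniteDimensional ℝ E]

theorem continuous_trace : Continuous fun A : E →L[ℝ] E ↦ LinearMap.trace ℝ E A :=
  (LinearMap.trace ℝ E ∘ₗ ContinuousLinearMap.coeLM ℝ).continuous_of_finiteDimensional

theorem continuous_tangentialTrace :
    Continuous fun x : (E →L[ℝ] E) × E ↦ tangentialTrace x.1 x.2 := by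
  unfold tangentialTrace
  exact (continuous_trace.comp continuous_fst).sub (by fun_prop)

theorem trace_fderiv_eq_zero_of_mem_closure {v : E → E} {W Ω : Set E} (hW : IsOpen W)
    (hv : ContDiffOn ℝ 1 v W) (h : ∀ x ∈ Ω, LinearMap.trace ℝ E (fderiv ℝ v x) = 0) {p : E}
    (hpW : p ∈ W) (hp : p ∈ closure Ω) : LinearMap.trace ℝ E (fderiv ℝ v p) = 0 := by
  have hcont : ContinuousAt (fun x ↦ LinearMap.trace ℝ E (fderiv ℝ v x)) p :=
    continuous_trace.continuousAt.comp
      ((hv.continuousOn_fderiv_of_isOpen hW le_rfl).continuousAt (hW.mem_nhds hpW))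
  simpa using hcont.continuousWithinAt.mem_closure hp (t := {0}) h

theorem exists_contDiff_hasCompactSupport_eventuallyEq {F : Type*} [NormedAddCommGroup F]
    [NormedSpace ℝ F] {k : ℕ∞} {S W : Set E} (hS : IsCompact S) (hW : IsOpen W) (hSW : S ⊆ W)
    {v : E → F} (hv : ContDiffOn ℝ k v W) :
    ∃ X : E → F, ContDiff ℝ k X ∧ HasCompactSupport X ∧ X =ᶠ[𝓝ˢ S] v := by
  obtain ⟨C, hC, hSC, hCW⟩ := exists_compact_between hS hW hSW
  obtain ⟨χ, hχ1, hχ0, -⟩ := exists_contMDiffMap_one_nhds_of_subset_interior (n := k)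
    (modelWithCornersSelf ℝ E) hS.isClosed hSC
  have hsupp : Function.support (fun x ↦ χ x • v x) ⊆ C := fun x hx ↦ by
    by_contra hxC
    simp [hχ0 x hxC] at hx
  refine ⟨fun x ↦ χ x • v x, contDiff_iff_contDiffAt.2 fun x ↦ ?_,
    .of_support_subset_isCompact hC hsupp, hχ1.mono fun x hx ↦ by simp [hx]⟩
  by_cases hx : x ∈ W
  · exact χ.contMDiff.contDiff.contDiffAt.smul (hv.contDiffAt (hW.mem_nhds hx))
  · refine (contDiffAt_const (c := 0)).congr_of_eventuallyEq ?_
    filter_upwards [hC.isClosed.isOpen_compl.mem_nhds fun hxC ↦ hx (hCW hxC)] with y hy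
    exact Function.notMem_support.1 fun hy' ↦ hy (hsupp hy')

end TangentialTrace

theorem div3_eq_trace (v : E3 → E3) (p : E3) :
    div3 v p = LinearMap.trace ℝ E3 (fderiv ℝ v p) := by
  rw [LinearMap.trace_eq_sum_inner _ (EuclideanSpace.basisFun (Fin 3) ℝ)]
  simp [div3, pder, e3, EuclideanSpace.inner_single_left]

theorem IsTangentAt.neg {S : Set E3} {p v : E3} (h : IsTangentAt S p v) :
    IsTangentAt S p (-v) := by
  obtain ⟨γ, hγS, hγ0, hγ⟩ := h
  have hγ' : HasDerivAt γ v (-0) := by simpa using hγ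
  exact ⟨fun t ↦ γ (-t), fun t ↦ hγS _, by simpa using hγ0,
    by simpa [Function.comp_def] using hγ'.scomp (0 : ℝ) (hasDerivAt_neg 0)⟩

namespace HasOuterNormal

variable {S Ωm Ωp : Set E3} {n : E3 → E3}

theorem subset_closure_interior (hS : HasOuterNormal S Ωm Ωp n) : S ⊆ closure Ωm :=
  hS.fr ▸ frontier_subset_closure

theorem subset_closure_exterior (hS : HasOuterNormal S Ωm Ωp n) : S ⊆ closure Ωp := by
  intro p hp
  obtain ⟨ε, hε, hout⟩ := hS.outward p hp
  have hlim : Tendsto (fun t : ℝ ↦ p + t • n p) (𝓝[>] 0) (𝓝 p) := by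
    have hcont : Continuous fun t : ℝ ↦ p + t • n p := by fun_prop
    simpa using (hcont.tendsto 0).mono_left nhdsWithin_le_nhds
  refine mem_closure_of_tendsto hlim ?_
  filter_upwards [Ioo_mem_nhdsGT hε] with t ht
  exact (hout t ht.1 ht.2).1

theorem integrableOn_of_continuousOn (hS : HasOuterNormal S Ωm Ωp n) {f : E3 → ℝ}
    (hf : ContinuousOn f S) : IntegrableOn f S μH[2] := by
  have hSm := hS.isCompact.measurableSet
  obtain ⟨C, hC⟩ := hS.isCompact.exists_bound_of_continuousOn hf
  exact .of_bound hS.hausdorffMeasure_lt_top (hf.aestronglyMeasurable hSm) C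
    (ae_restrict_of_forall_mem hSm hC)

theorem continuousOn_tangentialTrace (hS : HasOuterNormal S Ωm Ωp n) {A : E3 → E3 →L[ℝ] E3}
    (hA : ContinuousOn A S) : ContinuousOn (fun p ↦ tangentialTrace (A p) (n p)) S :=
  continuous_tangentialTrace.comp_continuousOn (hA.prodMk hS.continuousOn)

theorem lintegral_ofReal_le_hausdorffMeasure_image (hS : HasOuterNormal S Ωm Ωp n)
    {A : E3 → E3 →L[ℝ] E3} (hA : ContinuousOn A S) {τ : ℝ} (hτ0 : 0 < τ) (hτ : τ < 1 / 5)
    (hA1 : ∀ p ∈ S, ‖A p‖ ≤ 1 / 2) (hAτ : ∀ p ∈ S, ‖A p‖ ^ 2 ≤ τ) {φ : E3 → E3}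
    (hφ : Continuous φ) (hφi : Function.Injective φ) {ρ : ℝ} (hρ : 0 < ρ)
    (hφA : ∀ p ∈ S, ∀ x ∈ Metric.ball p ρ, ∀ y ∈ Metric.ball p ρ,
      ‖φ x - φ y - (x - y) - A p (x - y)‖ ≤ τ * ‖x - y‖) :
    ∫⁻ x in S, ENNReal.ofReal (1 + tangentialTrace (A x) (n x) - 22 * τ) ∂μH[2] ≤
      μH[2] (φ '' S) := by
  refine setLIntegral_le_measure_image_of_isCompact hS.isCompact hφ hφi fun p hp ↦ ?_
  obtain ⟨r, hr, hflat⟩ := hS.exists_norm_sub_starProjection_le hp hτ0 (by linarith)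
  obtain ⟨s, hs, hcont⟩ :=
    Metric.continuousOn_iff.1 (hS.continuousOn_tangentialTrace hA) p hp τ hτ0
  have hball {x : E3} (hx : x ∈ S ∩ Metric.ball p (min ρ (min r s))) :
      dist x p < ρ ∧ dist x p < r ∧ dist x p < s := by
    simpa only [Metric.mem_ball, lt_min_iff] using hx.2
  refine ⟨S ∩ Metric.ball p (min ρ (min r s)),
    inter_mem_nhdsWithin S (Metric.ball_mem_nhds p (by positivity)),
    hS.isCompact.measurableSet.inter measurableSet_ball, fun a ha ham ↦ ?_⟩
  have harea := ofReal_mul_hausdorffMeasure_le_image_of_compression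
    (finrank_orthogonal_singleton_of_norm_eq_one (hS.norm_eq_one p hp)) (hA1 p hp) (hAτ p hp) hτ
    (fun x hx y hy ↦ hφA p hp x (hball (ha hx)).1 y (hball (ha hy)).1)
    (fun x hx y hy ↦ hflat x ⟨(ha hx).1, (hball (ha hx)).2.1⟩ y
      ⟨(ha hy).1, (hball (ha hy)).2.1⟩)
  rw [trace_compression_orthogonal_singleton (hS.norm_eq_one p hp), ← setLIntegral_const] at harea
  refine (setLIntegral_mono' ham fun x hx ↦ ENNReal.ofReal_le_ofReal ?_).trans harea
  have hclose := hcont x (ha hx).1 (hball (ha hx)).2.2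
  rw [Real.dist_eq, abs_lt] at hclose
  change _ ≤ 1 + tangentialTrace (A p) (n p) - 21 * τ
  linarith [hclose.2]

theorem integral_tangentialTrace_le (hS : HasOuterNormal S Ωm Ωp n)
    {A : E3 → E3 →L[ℝ] E3} (hA : ContinuousOn A S) {t ε : ℝ} (ht : 0 < t)
    (h : ∫⁻ x in S, ENNReal.ofReal (1 + tangentialTrace (t • A x) (n x) - 22 * (t * ε)) ∂μH[2] ≤
      μH[2] S) :
    ∫ x in S, tangentialTrace (A x) (n x) ∂μH[2] ≤
      ε * (22 * (μH[2] : Measure E3).real S) := by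
  have hfin := hS.hausdorffMeasure_lt_top.ne
  have hint := hS.integrableOn_of_continuousOn (hS.continuousOn_tangentialTrace hA)
  have hconst (c : ℝ) : IntegrableOn (fun _ : E3 ↦ c) S μH[2] := integrableOn_const hfin
  have hlin : IntegrableOn (fun x ↦ 1 + t * tangentialTrace (A x) (n x)) S μH[2] :=
    (hconst 1).add (hint.const_mul t)
  simp only [tangentialTrace_smul] at h
  have hle := (ofReal_integral_le_lintegral_ofReal (hlin.sub (hconst (22 * (t * ε))))).trans h
  rw [ENNReal.ofReal_le_iff_le_toReal hfin, integral_sub' hlin (hconst _),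
    integral_add (hconst 1) (hint.const_mul t), integral_const_mul, setIntegral_const,
    setIntegral_const, smul_eq_mul, smul_eq_mul, mul_one, ← measureReal_def] at hle
  refine le_of_mul_le_mul_left ?_ ht
  linarith

theorem integral_tangentialTrace_fderiv_nonpos (hS : HasOuterNormal S Ωm Ωp n) {X : E3 → E3}
    (hX : ContDiff ℝ 1 X) (hXc : HasCompactSupport X) (htan : ∀ p ∈ S, IsTangentAt S p (X p)) :
    ∫ p in S, tangentialTrace (fderiv ℝ X p) (n p) ∂μH[2] ≤ 0 := by
  obtain ⟨K, hK⟩ := ContDiff.lipschitzWith_of_hasCompactSupport hXc hX one_ne_zero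
  obtain ⟨L, hL⟩ := hXc.exists_bound_of_continuous hX.continuous
  have hL' (x : E3) : ‖X x‖ ≤ L.toNNReal := (hL x).trans (Real.le_coe_toNNReal _)
  have hDX : Continuous (fderiv ℝ X) := hX.continuous_fderiv one_ne_zero
  have hDXu := (hXc.fderiv (𝕜 := ℝ)).uniformContinuous_of_continuous hDX
  obtain ⟨α, hα⟩ := IsFlow.exists_of_lipschitzWith hK hL'
  refine ge_of_tendsto (tendsto_mul_const_nhdsGT_zero (22 * (μH[2] : Measure E3).real S)) ?_
  filter_upwards [self_mem_nhdsWithin] with ε (hε : 0 < ε)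
  have hsmall (c : ℝ) {d : ℝ} (hd : 0 < d) : ∀ᶠ t : ℝ in 𝓝[>] 0, t * c < d :=
    (tendsto_mul_const_nhdsGT_zero c).eventually_lt_const hd
  obtain ⟨t, hexp, htK, htK2, htinj, htε, ht0, ht1⟩ :=
    ((hα.eventually_norm_sub_sub_smul_fderiv_le hK hL' (hX.differentiable one_ne_zero) hDXu
      hε).and <|
      (hsmall K one_half_pos).and <| (hsmall (K ^ 2) hε).and <|
      (hsmall (K * Real.exp K) one_pos).and <| (hsmall ε (by norm_num : (0 : ℝ) < 1 / 5)).and <|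
      Ioo_mem_nhdsGT one_pos).exists
  have ht : t ∈ Icc (0 : ℝ) 1 := ⟨ht0.le, ht1.le⟩
  have hnorm (p : E3) : ‖t • fderiv ℝ X p‖ ≤ t * K := by
    rw [norm_smul, Real.norm_of_nonneg ht0.le]
    gcongr
    exact norm_fderiv_le_of_lipschitz ℝ hK
  have himage : (fun x ↦ α x t) '' S ⊆ S :=
    image_subset_iff.2 fun x hx ↦ hα.mem_of_isCompact hK hS.isCompact htan hx ht
  refine hS.integral_tangentialTrace_le hDX.continuousOn ht0 ?_
  refine (hS.lintegral_ofReal_le_hausdorffMeasure_image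
    (A := fun p ↦ t • fderiv ℝ X p) (hDX.const_smul t).continuousOn (mul_pos ht0 hε) htε
    (fun p _ ↦ (hnorm p).trans htK.le) (fun p _ ↦ ?_) (hα.continuous_map hK ht)
    (hα.injective_map hK ht htinj) ht0 fun p _ ↦ hexp p).trans (measure_mono himage)
  calc ‖t • fderiv ℝ X p‖ ^ 2 ≤ (t * K) ^ 2 := by gcongr; exact hnorm p
    _ = t * (t * K ^ 2) := by ring
    _ ≤ t * ε := by gcongr

theorem integral_tangentialTrace_fderiv_eq_zero (hS : HasOuterNormal S Ωm Ωp n) {X : E3 → E3}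
    (hX : ContDiff ℝ 1 X) (hXc : HasCompactSupport X) (htan : ∀ p ∈ S, IsTangentAt S p (X p)) :
    ∫ p in S, tangentialTrace (fderiv ℝ X p) (n p) ∂μH[2] = 0 := by
  refine (hS.integral_tangentialTrace_fderiv_nonpos hX hXc htan).antisymm ?_
  have hneg := hS.integral_tangentialTrace_fderiv_nonpos hX.neg hXc.neg
    fun p hp ↦ (htan p hp).neg
  simpa only [fderiv_fun_neg, tangentialTrace_neg, integral_neg, Left.neg_nonpos_iff] using hneg

theorem integral_inner_fderiv_eq_zero (hS : HasOuterNormal S Ωm Ωp n) {v : E3 → E3} {W Ω : Set E3}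
    (hW : IsOpen W) (hSW : S ⊆ W) (hv : ContDiffOn ℝ 1 v W) (hSΩ : S ⊆ closure Ω)
    (hdiv : ∀ p ∈ Ω, div3 v p = 0) (htan : ∀ p ∈ S, IsTangentAt S p (v p)) :
    ∫ p in S, ⟪fderiv ℝ v p (n p), n p⟫ ∂μH[2] = 0 := by
  obtain ⟨X, hX, hXc, hXv⟩ :=
    exists_contDiff_hasCompactSupport_eventuallyEq (k := 1) hS.isCompact hW hSW hv
  have hXv' (p : E3) (hp : p ∈ S) : X =ᶠ[𝓝 p] v := eventually_nhdsSet_iff_forall.1 hXv p hp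
  have htr (p : E3) (hp : p ∈ S) : LinearMap.trace ℝ E3 (fderiv ℝ v p) = 0 :=
    trace_fderiv_eq_zero_of_mem_closure hW hv (fun x hx ↦ div3_eq_trace v x ▸ hdiv x hx)
      (hSW hp) (hSΩ hp)
  have hzero := hS.integral_tangentialTrace_fderiv_eq_zero hX hXc fun p hp ↦
    (hXv' p hp).eq_of_nhds ▸ htan p hp
  rw [← neg_eq_zero, ← integral_neg, ← hzero]
  refine setIntegral_congr_fun hS.isCompact.measurableSet fun p hp ↦ ?_
  simp only [tangentialTrace, (hXv' p hp).fderiv_eq, htr p hp, zero_sub]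

theorem integral_neg_of_forall_neg (hS : HasOuterNormal S Ωm Ωp n) (hne : S.Nonempty) {f : E3 → ℝ}
    (hf : ContinuousOn f S) (hneg : ∀ p ∈ S, f p < 0) : ∫ p in S, f p ∂μH[2] < 0 := by
  have hpos : 0 < ∫ p in S, -f p ∂μH[2] := by
    refine (setIntegral_pos_iff_support_of_nonneg_ae
      (ae_restrict_of_forall_mem hS.isCompact.measurableSet fun p hp ↦ (neg_pos.2 (hneg p hp)).le)
      (hS.integrableOn_of_continuousOn hf).neg).2 ?_
    refine (hS.hausdorffMeasure_pos hne).trans_le (measure_mono fun p hp ↦ ⟨?_, hp⟩)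
    exact (neg_pos.2 (hneg p hp)).ne'
  rwa [integral_neg, neg_pos] at hpos

end HasOuterNormal

/-- Let `S ⊂ ℝ³` be a C¹ compact closed embedded surface with exterior
unit normal `n`, bounding the region `Ωm` with exterior `Ωp`, and let `vp, vm` be C¹
vector fields, defined up to `S` on the exterior and interior respectively, divergence-free
and tangent to `S`. Then `∫_S ⟨D(vp + vm)·n, n⟩ dμH² = 0`; in particular the stability
inequality `⟨D(vp + vm)·n, n⟩ < 0` cannot hold at every point of `S`. -/
theorem statement1
    (S Ωm Ωp : Set E3) (vm vp : E3 → E3) (n : E3 → E3)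
    (hS : IsSurface 1 S) (hcpt : IsCompact S) (hne : S.Nonempty)
    (henc : EnclosedBy S Ωm Ωp)
    -- `n` is the exterior unit normal
    (hn_unit : ∀ p ∈ S, ‖n p‖ = 1)
    (hn_orth : ∀ p ∈ S, ∀ v, IsTangentAt S p v → ⟪n p, v⟫ = 0)
    (hn_cont : ContinuousOn n S)
    (hn_out : ∀ p ∈ S, ∃ ε > (0:ℝ), ∀ t : ℝ, 0 < t → t < ε →
      p + t • n p ∈ Ωp ∧ p - t • n p ∈ Ωm)
    -- the fields are C¹ up to `S` on their respective sides
    (hvm : ∃ W, IsOpen W ∧ Ωm ∪ S ⊆ W ∧ ContDiffOn ℝ 1 vm W)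
    (hvp : ∃ W, IsOpen W ∧ Ωp ∪ S ⊆ W ∧ ContDiffOn ℝ 1 vp W)
    -- divergence-free
    (hdivm : ∀ p ∈ Ωm, div3 vm p = 0)
    (hdivp : ∀ p ∈ Ωp, div3 vp p = 0)
    -- tangent to `S`
    (htm : ∀ p ∈ S, IsTangentAt S p (vm p))
    (htp : ∀ p ∈ S, IsTangentAt S p (vp p)) :
    (∫ p in S, ⟪(fderiv ℝ vp p + fderiv ℝ vm p) (n p), n p⟫ ∂μH[2]) = 0 ∧
      ¬ (∀ p ∈ S, ⟪(fderiv ℝ vp p + fderiv ℝ vm p) (n p), n p⟫ < 0) := by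
  have hSn : HasOuterNormal S Ωm Ωp n := ⟨henc, hS, hcpt, hn_unit, hn_orth, hn_cont, hn_out⟩
  obtain ⟨Wm, hWm, hΩm, hvm⟩ := hvm
  obtain ⟨Wp, hWp, hΩp, hvp⟩ := hvp
  have hSm := subset_union_right.trans hΩm
  have hSp := subset_union_right.trans hΩp
  have hDm := (hvm.continuousOn_fderiv_of_isOpen hWm le_rfl).mono hSm
  have hDp := (hvp.continuousOn_fderiv_of_isOpen hWp le_rfl).mono hSp
  have hcm := (hDm.clm_apply hn_cont).inner (𝕜 := ℝ) hn_cont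
  have hcp := (hDp.clm_apply hn_cont).inner (𝕜 := ℝ) hn_cont
  have hzero : ∫ p in S, ⟪(fderiv ℝ vp p + fderiv ℝ vm p) (n p), n p⟫ ∂μH[2] = 0 := by
    simp only [add_apply, inner_add_left]
    rw [integral_add (hSn.integrableOn_of_continuousOn hcp) (hSn.integrableOn_of_continuousOn hcm),
      hSn.integral_inner_fderiv_eq_zero hWp hSp hvp hSn.subset_closure_exterior hdivp htp,
      hSn.integral_inner_fderiv_eq_zero hWm hSm hvm hSn.subset_closure_interior hdivm htm, add_zero]
  have hcont := ((hDp.add hDm).clm_apply hn_cont).inner (𝕜 := ℝ) hn_cont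
  exact ⟨hzero, fun hneg ↦ (hSn.integral_neg_of_forall_neg hne hcont hneg).ne hzero⟩
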